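/- For every integer n > 25, the partition function is log-concave: p(n)² ≥ p(n-1) · p(n+1). -/

import Mathlib

/-!
The proof is analytic for `n > 6110` and a kernel computation for `26 ≤ n ≤ 6110`.

**Large `n`.** Let `P(z) = ∑ p(m) e^{-mz} = ∏ (1 - e^{-kz})⁻¹` for `Re z > 0`, and put
`a m = p(m) e^{-mτ}` for some `τ > 0`. Since `e^{-mτ}` is log-linear in `m`, log-concavity of `p` at
`n` is the same as `a (n-1) * a (n+1) ≤ (a n)²`, which by AM-GM follows from
`a (n-1) + a (n+1) ≤ 2 * a n`. The second difference `2 * a n - a (n-1) - a (n+1)` is a single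
contour integral (`integral_integrand`),
`(1/π) ∫_{-π}^{π} Re (P(τ + iθ) e^{inθ}) (1 - cos θ) dθ`,
which is estimated at the saddle point `τ = π²/(6N)`, `N² = (π²/6)(n - 1/24)`.

* For `θ = τs` with `|s| ≤ 1`, the modularity of the Dedekind eta function (`transform`) writes
  `P(τ + iθ) e^{inθ}` as an explicit elementary factor times `P(4π²/(τ + iθ))`, the latter being
  within `1/1000` of `1`. The elementary factor has a Gaussian modulus of width `N^{-1/2}` and a
  small phase (`P_eq`), so the integrand is at least an explicit `profile`, whose integral is
  computed by Gaussian moments (`integral_profile_ge`).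
* For `|θ| ≥ τ`, comparing the Euler product at `q` and at `‖q‖` term by term in the logarithm
  (`norm_eulerProd_le`, `delta_ge`) gains a factor `e^{-N/4}` over the value at `θ = 0`
  (`norm_P_far`), which beats the main term, of relative size `τ³/N²`, once `N ≥ 100`.

**Small `n`.** By the pentagonal number theorem `(∑ p(n) X^n) (∑ (-1)^k X^{k(3k-1)/2}) = 1`.
Evaluating at `X = x = 2^320`, which exceeds every `p(i)` with `i ≤ 6112` by the same saddle-point
bound (`p_lt_two_pow`), the base-`x` digits of the inverse of the truncated pentagonal sum modulo
`x^6112` are exactly `p(0), …, p(6111)` (`eq_sum_p_of_dvd`). The kernel finds this single big number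
by Newton iteration, checks that it is the inverse, and compares consecutive digits by divide and
conquer (`certificate_true`); soundness of the comparison is `chk_spec`.
-/

namespace PLC
open Finset PowerSeries

/-! ### The generating function as a formal power series -/

/-- The number of partitions of `n`. -/
noncomputable def p (n : ℕ) : ℕ := Fintype.card (Nat.Partition n)

section
open PowerSeries.WithPiTopology Nat.Partition

theorem geom_mul (i : ℕ) [TopologicalSpace ℤ] [DiscreteTopology ℤ] :
    (∑' j : ℕ, (X : ℤ⟦X⟧) ^ ((i + 1) * j)) * (1 - X ^ (i + 1)) = 1 := by
  simp_rw [pow_mul]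
  exact tsum_pow_mul_one_sub_of_constantCoeff_eq_zero (by simp)

/-- Euler: the generating function of `p` is the inverse of `∏ (1 - X^{i+1})`, which is the
pentagonal series. -/
theorem mk_p_mul_pentagonal :
    (PowerSeries.mk fun n ↦ (p n : ℤ)) * pentagonalSeries ℤ = 1 := by
  let _ : TopologicalSpace ℤ := ⊥
  have _ : DiscreteTopology ℤ := ⟨rfl⟩
  have h1 := powerSeriesMk_card_restricted_eq_tprod ℤ (fun _ ↦ True)
  have h2 : (PowerSeries.mk fun n ↦ (p n : ℤ)) =
      PowerSeries.mk fun n ↦ (#(restricted n (fun _ ↦ True)) : ℤ) := by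
    ext n; simp [p, restricted]
  rw [h2, h1, ← tprod_one_sub_X_pow ℤ, ← (multipliable_powerSeriesMk_card_restricted ℤ
    (fun _ ↦ True)).tprod_mul (multipliable_one_sub_X_pow ℤ)]
  simp [geom_mul]

/-- The number of partitions of `n` all of whose parts are at most `K`. -/
noncomputable def pLe (K n : ℕ) : ℕ := #(restricted n (fun i ↦ i ≤ K))

theorem mk_pLe_mul_prod (K : ℕ) :
    (PowerSeries.mk fun n ↦ (pLe K n : ℤ)) * ∏ i ∈ range K, (1 - X ^ (i + 1)) = 1 := by
  let _ : TopologicalSpace ℤ := ⊥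
  have _ : DiscreteTopology ℤ := ⟨rfl⟩
  have h1 := powerSeriesMk_card_restricted_eq_tprod ℤ (fun i ↦ i ≤ K)
  unfold pLe
  rw [h1, tprod_eq_prod (s := range K) (by intro b hb; simp at hb; rw [if_neg (by omega)]),
    ← prod_mul_distrib]
  refine prod_eq_one fun i hi ↦ ?_
  rw [if_pos (by simpa using hi), geom_mul]

theorem pLe_eq (K n : ℕ) (h : n ≤ K) : pLe K n = p n := by
  unfold pLe p restricted
  rw [filter_true_of_mem, card_univ]
  intro q _ i hi
  exact (Nat.Partition.le_of_mem_parts hi).trans h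

theorem pLe_le (K n : ℕ) : pLe K n ≤ p n := by
  unfold pLe p
  exact card_le_univ _
end

/-! ### Evaluating the generating function in the unit disc -/

/-- The power series `f` converges absolutely at `q`, with value `a`. -/
def EvalsTo (f : ℤ⟦X⟧) (q a : ℂ) : Prop :=
  Summable (fun n ↦ ‖((coeff n f : ℤ) : ℂ) * q ^ n‖) ∧ HasSum (fun n ↦ ((coeff n f : ℤ) : ℂ) * q ^ n) a

theorem EvalsTo.mul {f g : ℤ⟦X⟧} {q a b : ℂ} (hf : EvalsTo f q a) (hg : EvalsTo g q b) :
    EvalsTo (f * g) q (a * b) := by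
  have e : (fun n ↦ ((coeff n (f * g) : ℤ) : ℂ) * q ^ n) = fun n ↦ ∑ kl ∈ antidiagonal n,
      (((coeff kl.1 f : ℤ) : ℂ) * q ^ kl.1) * (((coeff kl.2 g : ℤ) : ℂ) * q ^ kl.2) := by
    ext n
    rw [coeff_mul]
    push_cast
    rw [sum_mul]
    refine sum_congr rfl fun x hx ↦ ?_
    rw [← mem_antidiagonal.mp hx, pow_add]
    ring
  have hs := summable_norm_sum_mul_antidiagonal_of_summable_norm hf.1 hg.1
  have ht := tsum_mul_tsum_eq_tsum_sum_antidiagonal_of_summable_norm hf.1 hg.1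
  rw [EvalsTo, e]
  refine ⟨by simpa only [← congrFun e] using hs, ?_⟩
  rw [hf.2.tsum_eq, hg.2.tsum_eq] at ht
  rw [ht]
  exact hs.of_norm.hasSum

/-- The geometric series `∑ X^(kj)`, the inverse of `1 - X^k` for `k > 0`. -/
noncomputable def geom (k : ℕ) : ℤ⟦X⟧ := PowerSeries.mk fun n ↦ if k ∣ n then 1 else 0

theorem geom_evalsTo {k : ℕ} (hk : 0 < k) {q : ℂ} (hq : ‖q‖ < 1) :
    EvalsTo (geom k) q (1 - q ^ k)⁻¹ := by
  have hqk : ‖q ^ k‖ < 1 := by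
    rw [norm_pow]; exact pow_lt_one₀ (norm_nonneg _) hq hk.ne'
  have h1 : HasSum (fun n ↦ ((coeff n (geom k) : ℤ) : ℂ) * q ^ n) (1 - q ^ k)⁻¹ := by
    have hinj : Function.Injective (fun j : ℕ ↦ k * j) := fun a b h ↦
      Nat.eq_of_mul_eq_mul_left hk h
    rw [← hinj.hasSum_iff]
    · simpa [geom, Function.comp_def, pow_mul] using hasSum_geometric_of_norm_lt_one hqk
    · intro x hx
      have : ¬ k ∣ x := by rintro ⟨c, rfl⟩; exact hx ⟨c, rfl⟩
      simp [geom, this]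
  refine ⟨?_, h1⟩
  refine Summable.of_nonneg_of_le (fun _ ↦ norm_nonneg _) (fun n ↦ ?_)
    (summable_geometric_of_lt_one (norm_nonneg _) hq)
  rw [geom, coeff_mk]
  split_ifs <;> simp

theorem geom_mul_one_sub {k : ℕ} (hk : 0 < k) : geom k * (1 - X ^ k) = 1 := by
  ext n
  rw [mul_sub, mul_one, map_sub, coeff_mul_X_pow', coeff_one, geom]
  simp only [coeff_mk]
  by_cases hn : n = 0
  · subst hn; simp [hk.ne']
  · by_cases h : k ≤ n
    · have e : k ∣ n - k ↔ k ∣ n := Nat.dvd_sub_iff_left h dvd_rfl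
      rw [if_pos h, if_neg hn]
      simp only [e, sub_self]
    · have : ¬ k ∣ n := fun hd ↦ h (Nat.le_of_dvd (Nat.pos_of_ne_zero hn) hd)
      simp [hn, h, this]

theorem mk_pLe_eq_prod (K : ℕ) :
    (PowerSeries.mk fun n ↦ (pLe K n : ℤ)) = ∏ i ∈ range K, geom (i + 1) := by
  have h : (∏ i ∈ range K, geom (i + 1)) * ∏ i ∈ range K, (1 - X ^ (i + 1) : ℤ⟦X⟧) = 1 := by
    rw [← prod_mul_distrib]
    exact prod_eq_one fun i _ ↦ geom_mul_one_sub (by simp)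
  exact mul_right_cancel₀ (right_ne_zero_of_mul_eq_one h) ((mk_pLe_mul_prod K).trans h.symm)

theorem pLe_evalsTo (K : ℕ) {q : ℂ} (hq : ‖q‖ < 1) :
    EvalsTo (PowerSeries.mk fun n ↦ (pLe K n : ℤ)) q (∏ i ∈ range K, (1 - q ^ (i + 1)))⁻¹ := by
  rw [mk_pLe_eq_prod]
  induction K with
  | zero =>
    constructor
    · refine summable_of_ne_finset_zero (s := {0}) fun b hb ↦ ?_
      simp [coeff_one, show b ≠ 0 by simpa using hb]
    · convert hasSum_ite_eq 0 (1 : ℂ) using 2 with n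
      · by_cases hn : n = 0 <;> simp [coeff_one, hn]
      · simp
  | succ K ih =>
    rw [prod_range_succ, prod_range_succ, mul_inv]
    exact ih.mul (geom_evalsTo (by simp) hq)

/-- The infinite product `∏ (1 - q^{i+1})`, convergent for `‖q‖ < 1`. -/
noncomputable def eulerProd (q : ℂ) : ℂ := ∏' i : ℕ, (1 - q ^ (i + 1))

theorem tendsto_eulerProd {q : ℂ} (hq : ‖q‖ < 1) :
    Filter.Tendsto (fun K ↦ ∏ i ∈ range K, (1 - q ^ (i + 1))) Filter.atTop
      (nhds (eulerProd q)) :=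
  (ModularForm.multipliable_one_sub_pow hq).tendsto_prod_tprod_nat

theorem eulerProd_ne_zero {q : ℂ} (hq : ‖q‖ < 1) : eulerProd q ≠ 0 := by
  have h := tprod_one_add_ne_zero_of_summable (f := fun n : ℕ ↦ -q ^ (n + 1)) ?_ ?_
  · simpa [eulerProd, sub_eq_add_neg] using h
  · intro i h
    have h1 : q ^ (i + 1) = 1 := by linear_combination -h
    have h2 := pow_lt_one₀ (norm_nonneg _) hq (Nat.succ_ne_zero i)
    rw [← norm_pow, h1] at h2
    simp at h2
  · simpa using (summable_nat_add_iff 1).mpr (summable_geometric_of_lt_one (norm_nonneg _) hq)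

/-- A partial sum of `∑ p(m) r^m` up to `n` involves only parts at most `n`, so it is bounded by the
finite product `∏_{i<n} (1 - r^{i+1})⁻¹`, and these products converge. -/
theorem summable_p {r : ℝ} (h0 : 0 ≤ r) (h1 : r < 1) : Summable fun n ↦ (p n : ℝ) * r ^ n := by
  have hq : ‖(r : ℂ)‖ < 1 := by simpa [abs_of_nonneg h0] using h1
  have ht := ((tendsto_eulerProd hq).inv₀ (eulerProd_ne_zero hq)).norm
  obtain ⟨C, hC⟩ := ht.bddAbove_range
  refine summable_of_sum_range_le (c := C) (fun n ↦ by positivity) fun n ↦ ?_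
  refine le_trans ?_ (hC ⟨n, rfl⟩)
  have he := pLe_evalsTo n hq
  have h3 : HasSum (fun m ↦ (pLe n m : ℝ) * r ^ m)
      (∏ i ∈ range n, (1 - (r : ℂ) ^ (i + 1)))⁻¹.re := by
    have := Complex.hasSum_re he.2
    simp only [coeff_mk] at this
    convert this using 2 with m
    simp [← Complex.ofReal_pow]
  calc ∑ i ∈ range n, (p i : ℝ) * r ^ i = ∑ i ∈ range n, (pLe n i : ℝ) * r ^ i := by
        refine sum_congr rfl fun i hi ↦ ?_
        rw [pLe_eq n i (by simpa using (mem_range.mp hi).le)]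
    _ ≤ (∏ i ∈ range n, (1 - (r : ℂ) ^ (i + 1)))⁻¹.re :=
        sum_le_hasSum _ (fun i _ ↦ by positivity) h3
    _ ≤ _ := Complex.re_le_norm _

/-- `∑ p(n) q^n = ∏ (1 - q^{i+1})⁻¹`, by letting `K → ∞` in the identity for parts at most `K`;
the terms are dominated by `p(n) ‖q‖^n`. -/
theorem hasSum_p {q : ℂ} (hq : ‖q‖ < 1) :
    HasSum (fun n ↦ (p n : ℂ) * q ^ n) (eulerProd q)⁻¹ := by
  have hs : Summable fun n ↦ (p n : ℝ) * ‖q‖ ^ n := summable_p (norm_nonneg _) hq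
  have hs' : Summable fun n ↦ (p n : ℂ) * q ^ n := by
    refine Summable.of_norm ?_
    simpa using hs
  have hlim := tendsto_tsum_of_dominated_convergence (𝓕 := Filter.atTop)
    (f := fun K n ↦ (pLe K n : ℂ) * q ^ n) (g := fun n ↦ (p n : ℂ) * q ^ n) hs ?_ ?_
  · have h2 := (tendsto_eulerProd hq).inv₀ (eulerProd_ne_zero hq)
    have h3 : ∀ K, ∑' n, (pLe K n : ℂ) * q ^ n = (∏ i ∈ range K, (1 - q ^ (i + 1)))⁻¹ :=
      fun K ↦ by simpa using (pLe_evalsTo K hq).2.tsum_eq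
    simp_rw [h3] at hlim
    rw [tendsto_nhds_unique h2 hlim]
    exact hs'.hasSum
  · intro n
    refine tendsto_const_nhds.congr' ?_
    filter_upwards [Filter.eventually_ge_atTop n] with K hK
    rw [pLe_eq K n hK]
  · refine Filter.Eventually.of_forall fun K n ↦ ?_
    rw [norm_mul, norm_pow, Complex.norm_natCast]
    gcongr
    exact pLe_le K n

/-! ### Size of the Euler product off the real axis -/

/-- Taking logarithms, `log ‖1 - w‖ - log (1 - ‖w‖) = ∑ (‖w‖^k - Re w^k) / k`. All terms are
nonnegative and the first one is kept. -/
theorem one_sub_norm_le {w : ℂ} (hw : ‖w‖ < 1) :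
    1 - ‖w‖ ≤ ‖1 - w‖ * Real.exp (-(‖w‖ - w.re)) := by
  have hne : 0 < ‖1 - w‖ := by
    rw [norm_pos_iff, sub_ne_zero]
    rintro rfl
    simp at hw
  have h1 := Real.hasSum_pow_div_log_of_abs_lt_one (x := ‖w‖) (by simpa using hw)
  have h2 := Complex.hasSum_re (Complex.hasSum_taylorSeries_neg_log hw)
  have h3 := (hasSum_nat_add_iff' 1).mpr h2
  simp only [sum_range_one, Nat.cast_zero, div_zero, Complex.zero_re, sub_zero] at h3
  rw [Complex.neg_re, Complex.log_re] at h3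
  have h4 := h1.sub h3
  have h5 := le_hasSum h4 0 fun j _ ↦ by
    have : ((w ^ (j + 1) / ((j + 1 : ℕ) : ℂ)).re) ≤ ‖w‖ ^ (j + 1) / ((j : ℝ) + 1) := by
      refine (Complex.re_le_norm _).trans (le_of_eq ?_)
      rw [norm_div, norm_pow, Complex.norm_natCast]
      push_cast
      rfl
    linarith
  simp only [zero_add, pow_one, Nat.cast_zero, Nat.cast_one, div_one] at h5
  have h6 : Real.log (1 - ‖w‖) ≤ Real.log ‖1 - w‖ + -(‖w‖ - w.re) := by linarith
  calc 1 - ‖w‖ = Real.exp (Real.log (1 - ‖w‖)) := (Real.exp_log (by linarith)).symm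
    _ ≤ Real.exp (Real.log ‖1 - w‖ + -(‖w‖ - w.re)) := Real.exp_le_exp.mpr h6
    _ = _ := by rw [Real.exp_add, Real.exp_log hne]

/-- The gain of `∏ ‖1 - q^k‖` over `∏ (1 - ‖q‖^k)`: each factor contributes
`exp (‖q‖^k - Re q^k)` by `one_sub_norm_le`, and the exponents sum to
`‖q‖ / (1 - ‖q‖) - Re (q / (1 - q))`. -/
theorem norm_eulerProd_le {q : ℂ} (hq : ‖q‖ < 1) :
    ‖eulerProd ‖q‖‖ ≤ ‖eulerProd q‖ *
      Real.exp (-(‖q‖ * (1 - ‖q‖)⁻¹ - (q * (1 - q)⁻¹).re)) := by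
  have hr : ‖((‖q‖ : ℝ) : ℂ)‖ < 1 := by simpa using hq
  have t1 := (tendsto_eulerProd hr).norm
  have t2 := (tendsto_eulerProd hq).norm
  have s1 := (hasSum_geometric_of_lt_one (norm_nonneg q) hq).mul_left ‖q‖
  have s2 := Complex.hasSum_re ((hasSum_geometric_of_norm_lt_one hq).mul_left q)
  have t3 := (s1.sub s2).tendsto_sum_nat
  refine le_of_tendsto_of_tendsto' t1 (t2.mul (t3.neg.rexp)) fun K ↦ ?_
  rw [norm_prod, norm_prod, ← sum_neg_distrib, Real.exp_sum, ← prod_mul_distrib]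
  refine prod_le_prod (fun _ _ ↦ norm_nonneg _) fun i _ ↦ ?_
  have hk : ‖q ^ (i + 1)‖ < 1 := by
    rw [norm_pow]; exact pow_lt_one₀ (norm_nonneg _) hq (by simp)
  have := one_sub_norm_le hk
  have e : ‖1 - (‖q‖ : ℂ) ^ (i + 1)‖ = 1 - ‖q ^ (i + 1)‖ := by
    rw [norm_pow] at hk ⊢
    rw [← Complex.ofReal_pow, ← Complex.ofReal_one, ← Complex.ofReal_sub, Complex.norm_real,
      Real.norm_of_nonneg (by linarith)]
  rw [e]
  rw [← pow_succ', ← pow_succ', ← norm_pow]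
  exact this

/-- The exponent of `norm_eulerProd_le` at `q = r e^{iθ}`, in terms of `1 - cos θ`. The cancelling
`2` and `/ 2` keep `y = 2r(1 - cos θ)` visible: the value is `y(1+r)/2 / ((1-r)((1-r)² + y))`. -/
theorem delta_eq {r θ : ℝ} (h0 : 0 < r) (h1 : r < 1) :
    r * (1 - r)⁻¹ - ((r * Complex.exp (θ * Complex.I)) *
      (1 - r * Complex.exp (θ * Complex.I))⁻¹).re =
    2 * r * (1 - Real.cos θ) * (1 + r) / 2 / ((1 - r) * ((1 - r) ^ 2 + 2 * r * (1 - Real.cos θ))) := by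
  have hc := Real.cos_le_one θ
  have hs := Real.sin_sq_add_cos_sq θ
  have hD : 0 < 1 - r := by linarith
  have hy : 0 ≤ 2 * r * (1 - Real.cos θ) := by
    have : 0 ≤ 1 - Real.cos θ := by linarith
    positivity
  have hden : 0 < (1 - r) ^ 2 + 2 * r * (1 - Real.cos θ) := by positivity
  rw [Complex.mul_re, Complex.inv_re, Complex.inv_im]
  simp only [Complex.mul_re, Complex.mul_im, Complex.sub_re, Complex.sub_im, Complex.one_re,
    Complex.one_im, Complex.exp_ofReal_mul_I_re, Complex.exp_ofReal_mul_I_im, Complex.ofReal_re,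
    Complex.ofReal_im, Complex.normSq_apply]
  have e : (1 - (r * Real.cos θ - 0 * Real.sin θ)) * (1 - (r * Real.cos θ - 0 * Real.sin θ)) +
      (0 - (r * Real.sin θ + 0 * Real.cos θ)) * (0 - (r * Real.sin θ + 0 * Real.cos θ)) =
      (1 - r) ^ 2 + 2 * r * (1 - Real.cos θ) := by linear_combination r ^ 2 * hs
  rw [e]
  obtain ⟨E, hE⟩ : ∃ E, E = (1 - r) ^ 2 + 2 * r * (1 - Real.cos θ) := ⟨_, rfl⟩
  rw [← hE] at hden ⊢
  have hD' := hD.ne'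
  have hE' := hden.ne'
  calc _ = r / (1 - r) - (r * Real.cos θ * (1 - r * Real.cos θ) - r ^ 2 * Real.sin θ ^ 2) / E := by
        ring
    _ = _ := by
      rw [div_sub_div _ _ hD' hE', div_eq_div_iff (by positivity) (by positivity), hE]
      linear_combination (r ^ 2 * (1 - r) * ((1 - r) * ((1 - r) ^ 2 + 2 * r * (1 - Real.cos θ)))) * hs

/-- For `q = e^{-τ + iθ}` with `|θ| ≥ τ`, the exponent of `norm_eulerProd_le` is at least `0.45/τ`
(its limiting value at `|θ| = τ → 0` is `1/(2τ)`). -/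
theorem delta_ge {τ θ : ℝ} (h0 : 0 < τ) (h1 : τ ≤ 1 / 50) (h2 : τ ≤ |θ|) (h3 : |θ| ≤ Real.pi) :
    0.45 / τ ≤ Real.exp (-τ) * (1 - Real.exp (-τ))⁻¹ -
      ((Real.exp (-τ) * Complex.exp (θ * Complex.I)) *
      (1 - Real.exp (-τ) * Complex.exp (θ * Complex.I))⁻¹).re := by
  have hr1 : Real.exp (-τ) < 1 := by rw [Real.exp_lt_one_iff]; linarith
  rw [delta_eq (Real.exp_pos _) hr1]
  have hr0 : 1 - τ ≤ Real.exp (-τ) := by linarith [Real.add_one_le_exp (-τ)]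
  set r := Real.exp (-τ)
  have hcos : Real.cos θ ≤ Real.cos τ := by
    rw [← Real.cos_abs θ]
    exact Real.cos_le_cos_of_nonneg_of_le_pi h0.le h3 h2
  have hb := Real.cos_bound (x := τ) (by rw [abs_of_pos h0]; linarith)
  rw [abs_of_pos h0] at hb
  have hb' := (abs_le.mp hb).2
  have hy : 0.48 * τ ^ 2 ≤ r * (1 - Real.cos θ) := by
    have : 0.499 * τ ^ 2 ≤ 1 - Real.cos θ := by 
      have h4 : τ ^ 2 * τ ^ 2 ≤ (1 / 50) ^ 2 * τ ^ 2 := by gcongr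
      nlinarith [sq_nonneg τ]
    calc 0.48 * τ ^ 2 ≤ 0.98 * (0.499 * τ ^ 2) := by nlinarith
      _ ≤ _ := by gcongr; linarith
  have hy0 : 0 < r * (1 - Real.cos θ) := lt_of_lt_of_le (by positivity) hy
  set y := r * (1 - Real.cos θ)
  have hD : 0 < 1 - r := by linarith
  have hDt : 1 - r ≤ τ := by linarith
  rw [mul_assoc 2 r, div_le_div_iff₀ h0 (by positivity)]
  have h5 : (1 - r) * ((1 - r) ^ 2 + 2 * y) ≤ τ * (τ ^ 2 + 2 * y) := by gcongr
  have h6 : 0.45 * (τ ^ 2 + 2 * y) ≤ 2 * y * (1 + r) / 2 := by nlinarith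
  nlinarith

/-! ### The eta transformation -/

/-- The principal square root is multiplicative here: for `Re w > 0` the arguments of `I` and `w` add
up to less than `π`. -/
theorem sqrt_I_mul {w : ℂ} (hw : 0 < w.re) :
    Complex.sqrt (Complex.I * w) = Complex.sqrt Complex.I * Complex.sqrt w := by
  have hne : w ≠ 0 := by rintro rfl; simp at hw
  have ha := Complex.abs_arg_lt_pi_div_two_iff.mpr (Or.inl hw)
  have ha' := abs_lt.mp ha
  have hm : Complex.arg Complex.I + w.arg ∈ Set.Ioc (-Real.pi) Real.pi := by
    rw [Complex.arg_I]
    constructor <;> linarith [Real.pi_pos]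
  rw [sqrt_eq_exp (mul_ne_zero Complex.I_ne_zero hne), sqrt_eq_exp Complex.I_ne_zero,
    sqrt_eq_exp hne, Complex.log_mul Complex.I_ne_zero hne hm, ← Complex.exp_add]
  congr 1
  ring

/-- `η(iz/2π) = e^{-z/24} ∏ (1 - e^{-kz})`. -/
theorem eta_I_mul (z : ℂ) : ModularForm.eta (Complex.I * z / (2 * Real.pi)) =
    Complex.exp (-z / 24) * eulerProd (Complex.exp (-z)) := by
  have hpi : (Real.pi : ℂ) ≠ 0 := by exact_mod_cast Real.pi_ne_zero
  have e : 2 * Real.pi * Complex.I * (Complex.I * z / (2 * Real.pi)) = -z := by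
    field_simp
    rw [Complex.I_sq]; ring
  rw [ModularForm.eta, eulerProd]
  congr 1
  · rw [Function.Periodic.qParam, e]; simp
  · simp only [ModularForm.eta_q_eq_pow, e]

/-- The modular transformation of `∏ (1 - e^{-kz})⁻¹` under `z ↦ 4π²/z`, equivalent to
`η(-1/τ) = √(-iτ) η(τ)` at `τ = iz/2π`. -/
theorem transform {z : ℂ} (hz : 0 < z.re) :
    (eulerProd (Complex.exp (-z)))⁻¹ = Complex.sqrt (z / (2 * Real.pi)) *
      Complex.exp (Real.pi ^ 2 / (6 * z) - z / 24) *
      (eulerProd (Complex.exp (-(4 * Real.pi ^ 2 / z))))⁻¹ := by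
  have hne : z ≠ 0 := by rintro rfl; simp at hz
  have hpi : (Real.pi : ℂ) ≠ 0 := by exact_mod_cast Real.pi_ne_zero
  have hw : 0 < (z / (2 * Real.pi)).re := by
    rw [show (2 * Real.pi : ℂ) = ((2 * Real.pi : ℝ) : ℂ) by push_cast; rfl, Complex.div_ofReal_re]
    positivity
  have him : 0 < (Complex.I * (z / (2 * Real.pi))).im := by
    rw [Complex.I_mul_im]; exact hw
  have h := ModularForm.eta_comp_eq_csqrt_I_inv (x := Complex.I * (z / (2 * Real.pi))) him
  simp only [Function.comp, Pi.smul_apply, Pi.mul_apply, smul_eq_mul] at h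
  rw [sqrt_I_mul hw, ← mul_div_assoc, eta_I_mul] at h
  have e : -1 / (Complex.I * z / (2 * Real.pi)) =
      Complex.I * (4 * Real.pi ^ 2 / z) / (2 * Real.pi) := by
    field_simp
    rw [Complex.I_sq]; ring
  rw [e, eta_I_mul] at h
  have hI : Complex.sqrt Complex.I ≠ 0 := by simp [Complex.sqrt]
  have hws : Complex.sqrt (z / (2 * Real.pi)) ≠ 0 := by
    simp [Complex.sqrt, hne, hpi]
  have hq1 : ‖Complex.exp (-z)‖ < 1 := by
    rw [Complex.norm_exp, Real.exp_lt_one_iff]; simpa using hz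
  have h1 := eulerProd_ne_zero hq1
  have e2 : Complex.exp (Real.pi ^ 2 / (6 * z) - z / 24) =
      Complex.exp (-z / 24) * (Complex.exp (-(4 * Real.pi ^ 2 / z) / 24))⁻¹ := by
    rw [← Complex.exp_neg, ← Complex.exp_add]
    congr 1
    field_simp
    ring
  have h2 : eulerProd (Complex.exp (-(4 * Real.pi ^ 2 / z))) = 
    Complex.sqrt (z / (2 * Real.pi)) * Complex.exp (Real.pi ^ 2 / (6 * z) - z / 24) *
      eulerProd (Complex.exp (-z)) := by
    rw [e2]
    have hx := Complex.exp_ne_zero (-(4 * Real.pi ^ 2 / z) / 24)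
    field_simp at h ⊢
    linear_combination h
  rw [h2]
  have hx := Complex.exp_ne_zero (Real.pi ^ 2 / (6 * z) - z / 24)
  field_simp

/-! ### The second difference as an integral -/

theorem hasSum_of_eq {α : Type*} [AddCommMonoid α] [TopologicalSpace α] {f g : ℕ → α} {a : α}
    (h : ∀ m, f m = g m) (hg : HasSum g a) : HasSum f a := by
  rwa [funext h]

/-- The generating function `P(z) = ∑ p(n) e^{-nz}`, for `Re z > 0`. It is defined by the product
formula; `hasSum_P` is the series. -/
noncomputable def P (z : ℂ) : ℂ := (eulerProd (Complex.exp (-z)))⁻¹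

theorem norm_exp_neg_lt {z : ℂ} (hz : 0 < z.re) : ‖Complex.exp (-z)‖ < 1 := by
  rw [Complex.norm_exp, Real.exp_lt_one_iff]; simpa using hz

theorem hasSum_P {z : ℂ} (hz : 0 < z.re) :
    HasSum (fun m : ℕ ↦ (p m : ℂ) * Complex.exp (-(m * z))) (P z) := by
  refine hasSum_of_eq (fun m ↦ ?_) (hasSum_p (norm_exp_neg_lt hz))
  rw [← Complex.exp_nat_mul]
  congr 1
  congr 1
  ring

theorem norm_P_sub_one_le {w : ℂ} (hw : 10 ≤ w.re) : ‖P w - 1‖ ≤ 1 / 1000 := by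
  have hq := norm_exp_neg_lt (z := w) (by linarith)
  set q := Complex.exp (-w) with hqd
  have hr : ‖q‖ ≤ 1 / 10000 := by
    rw [hqd, Complex.norm_exp, Complex.neg_re]
    have h1 : Real.exp 10 ≤ Real.exp w.re := Real.exp_le_exp.mpr hw
    have h2 : (2.7 : ℝ) ^ 10 ≤ Real.exp 10 := by
      rw [show (10 : ℝ) = ((10 : ℕ) : ℝ) * 1 by norm_num, Real.exp_nat_mul]
      gcongr
      linarith [Real.exp_one_gt_d9]
    rw [Real.exp_neg, inv_eq_one_div]
    refine one_div_le_one_div_of_le (by norm_num) ?_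
    norm_num at h2 ⊢
    linarith
  have hE : ‖eulerProd q - 1‖ ≤ 1 / 2000 := by
    refine le_of_tendsto ((tendsto_eulerProd hq).sub_const 1).norm (Filter.Eventually.of_forall fun K ↦ ?_)
    have h1 := (range K).norm_prod_one_add_sub_one_le (fun i ↦ -q ^ (i + 1))
    simp only [← sub_eq_add_neg] at h1
    refine h1.trans ?_
    have h2 : ∑ i ∈ range K, ‖-q ^ (i + 1)‖ ≤ 1 / 4000 := by
      have h3 := ((hasSum_geometric_of_lt_one (norm_nonneg q) hq).mul_left ‖q‖)
      have h4 := sum_le_hasSum (range K) (fun i _ ↦ by positivity) h3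
      have e : ∀ i, ‖-q ^ (i + 1)‖ = ‖q‖ * ‖q‖ ^ i := fun i ↦ by
        rw [norm_neg, norm_pow, pow_succ']
      simp_rw [e]
      refine h4.trans ?_
      rw [← div_eq_mul_inv, div_le_iff₀ (by linarith)]
      linarith
    replace h2 := Real.exp_le_exp.mpr h2
    simp only [norm_neg, norm_pow] at h2
    have h6 := Real.exp_bound_div_one_sub_of_interval' (x := 1 / 4000) (by norm_num) (by norm_num)
    norm_num at h6 ⊢
    linarith
  have hne := eulerProd_ne_zero hq
  have e : P w - 1 = -(eulerProd q - 1) / eulerProd q := by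
    rw [P, ← hqd]; field_simp; ring
  rw [e, norm_div, norm_neg, div_le_iff₀ (norm_pos_iff.mpr hne)]
  have : 1 - ‖eulerProd q - 1‖ ≤ ‖eulerProd q‖ := by
    have := norm_sub_norm_le (1 : ℂ) (1 - eulerProd q)
    rw [norm_one, sub_sub_cancel, norm_sub_rev] at this
    exact this
  linarith

theorem integral_cos_int (k : ℤ) : ∫ θ in (-Real.pi)..Real.pi, Real.cos (k * θ) =
    if k = 0 then 2 * Real.pi else 0 := by
  split_ifs with h
  · subst h; simp; ring
  · have hk : (k : ℝ) ≠ 0 := by exact_mod_cast h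
    rw [intervalIntegral.integral_comp_mul_left _ hk, integral_cos]
    simp

/-- The weight `1 - cos θ` turns Fourier coefficients into second differences. -/
theorem integral_cos_mul (k : ℤ) :
    ∫ θ in (-Real.pi)..Real.pi, Real.cos (k * θ) * (1 - Real.cos θ) =
    Real.pi * ((if k = 0 then 2 else 0) - (if k = 1 then 1 else 0) - (if k = -1 then 1 else 0)) := by
  have e : ∀ θ : ℝ, Real.cos (k * θ) * (1 - Real.cos θ) = Real.cos (k * θ) -
      (1 / 2) * (Real.cos ((k - 1 : ℤ) * θ) + Real.cos ((k + 1 : ℤ) * θ)) := by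
    intro θ
    push_cast
    rw [sub_mul, add_mul, one_mul, Real.cos_add, Real.cos_sub]
    ring
  simp_rw [e]
  rw [intervalIntegral.integral_sub (by apply Continuous.intervalIntegrable; fun_prop)
    (by apply Continuous.intervalIntegrable; fun_prop), intervalIntegral.integral_const_mul,
    intervalIntegral.integral_add (by apply Continuous.intervalIntegrable; fun_prop)
    (by apply Continuous.intervalIntegrable; fun_prop), integral_cos_int, integral_cos_int,
    integral_cos_int]
  simp only [sub_eq_zero, add_eq_zero_iff_eq_neg]
  split_ifs <;> ring

/-- The integrand `Re (P(τ + iθ) e^{inθ}) (1 - cos θ)`, whose integral over a period is `π` times the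
second difference of `m ↦ p(m) e^{-mτ}` around `n`. -/
noncomputable def integrand (n : ℕ) (τ θ : ℝ) : ℝ :=
  (P (τ + θ * Complex.I) * Complex.exp (n * (θ * Complex.I))).re * (1 - Real.cos θ)

theorem hasSum_integrand (n : ℕ) {τ : ℝ} (hτ : 0 < τ) (θ : ℝ) :
    HasSum (fun m : ℕ ↦ (p m : ℝ) * Real.exp (-(m * τ)) *
      (Real.cos (((n - m : ℤ) : ℝ) * θ) * (1 - Real.cos θ))) (integrand n τ θ) := by
  have h := Complex.hasSum_re ((hasSum_P (z := τ + θ * Complex.I) (by simpa using hτ)).mul_right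
    (Complex.exp (n * (θ * Complex.I))))
  refine hasSum_of_eq (fun m ↦ ?_) (h.mul_right (1 - Real.cos θ))
  rw [← mul_assoc]
  congr 1
  rw [mul_assoc, mul_assoc (p m : ℂ), ← Complex.exp_add, show (p m : ℂ) = ((p m : ℝ) : ℂ) by simp,
    Complex.re_ofReal_mul, show (-((m : ℂ) * (τ + θ * Complex.I)) + n * (θ * Complex.I)) =
      ((-(m * τ) : ℝ) : ℂ) + ((((n - m : ℤ) : ℝ) * θ : ℝ) : ℂ) * Complex.I by push_cast; ring,
    Complex.exp_add, ← Complex.ofReal_exp, Complex.re_ofReal_mul, Complex.exp_ofReal_mul_I_re]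

theorem summable_a {τ : ℝ} (hτ : 0 < τ) :
    Summable fun m : ℕ ↦ (p m : ℝ) * Real.exp (-(m * τ)) := by
  have := summable_p (Real.exp_pos (-τ)).le (by rw [Real.exp_lt_one_iff]; linarith)
  convert this using 3 with m
  rw [← Real.exp_nat_mul]
  congr 1
  ring

theorem integral_integrand (n : ℕ) {τ : ℝ} (hτ : 0 < τ) :
    ∫ θ in (-Real.pi)..Real.pi, integrand (n + 1) τ θ =
      Real.pi * (2 * (p (n + 1) * Real.exp (-((n + 1 : ℕ) * τ))) - p n * Real.exp (-(n * τ)) -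
        p (n + 2) * Real.exp (-((n + 2 : ℕ) * τ))) := by
  have h := intervalIntegral.hasSum_integral_of_dominated_convergence (μ := MeasureTheory.volume)
    (a := -Real.pi) (b := Real.pi) (f := integrand (n + 1) τ)
    (F := fun (m : ℕ) θ ↦ (p m : ℝ) * Real.exp (-(m * τ)) *
      (Real.cos ((((n + 1 : ℕ) - m : ℤ) : ℝ) * θ) * (1 - Real.cos θ)))
    (fun m _ ↦ (p m : ℝ) * Real.exp (-(m * τ)) * 2) ?_ ?_ ?_ ?_ ?_
  · simp only [intervalIntegral.integral_const_mul, integral_cos_mul] at h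
    refine h.unique ?_
    have h1 := hasSum_ite_eq (n + 1) (Real.pi * (2 * (p (n + 1) * Real.exp (-((n + 1 : ℕ) * τ)))))
    have h2 := hasSum_ite_eq n (Real.pi * (p n * Real.exp (-(n * τ))))
    have h3 := hasSum_ite_eq (n + 2) (Real.pi * (p (n + 2) * Real.exp (-((n + 2 : ℕ) * τ))))
    convert (h1.sub h2).sub h3 using 1
    · ext m
      by_cases e1 : m = n + 1
      · subst e1; simp; ring
      by_cases e2 : m = n
      · subst e2; simp; ring
      by_cases e3 : m = n + 2
      · subst e3; simp; ring
      rw [if_neg (by omega), if_neg (by omega), if_neg (by omega), if_neg e1, if_neg e2, if_neg e3]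
      simp
    · ring
  · intro m
    apply Continuous.aestronglyMeasurable
    fun_prop
  · refine fun m ↦ Filter.Eventually.of_forall fun θ _ ↦ ?_
    rw [norm_mul, Real.norm_of_nonneg (by positivity : 0 ≤ (p m : ℝ) * Real.exp (-(m * τ))), norm_mul]
    gcongr
    have h1 := Real.abs_cos_le_one ((((n + 1 : ℕ) - m : ℤ) : ℝ) * θ)
    have h2 : ‖1 - Real.cos θ‖ ≤ 2 := by
      rw [Real.norm_eq_abs, abs_le]
      constructor <;> linarith [Real.cos_le_one θ, Real.neg_one_le_cos θ]
    calc _ ≤ 1 * (2 : ℝ) := mul_le_mul h1 h2 (norm_nonneg _) zero_le_one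
      _ = 2 := one_mul 2
  · exact Filter.Eventually.of_forall fun θ _ ↦ (summable_a hτ).mul_right 2
  · exact intervalIntegrable_const
  · exact Filter.Eventually.of_forall fun θ _ ↦ hasSum_integrand (n + 1) hτ θ

/-! ### The generating function in polar form near the saddle point -/

theorem sqrt_polar {τ : ℝ} (hτ : 0 < τ) (s : ℝ) :
    Complex.sqrt ((τ + (τ * s : ℝ) * Complex.I) / (2 * Real.pi)) =
      ((√(τ / (2 * Real.pi)) * √‖1 + s * Complex.I‖ : ℝ) : ℂ) *
        Complex.exp (((1 + s * Complex.I).arg / 2 : ℝ) * Complex.I) := by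
  have hne : (1 + s * Complex.I) ≠ 0 := by
    intro h
    simpa using congrArg Complex.re h
  have hc : 0 < τ / (2 * Real.pi) := by positivity
  have e : (τ + (τ * s : ℝ) * Complex.I) / (2 * Real.pi) =
      ((τ / (2 * Real.pi) : ℝ) : ℂ) * (1 + s * Complex.I) := by push_cast; ring
  have h1 : √(τ / (2 * Real.pi)) = Real.exp (Real.log (τ / (2 * Real.pi)) / 2) := by
    rw [Real.exp_half, Real.exp_log hc]
  have h2 : √‖1 + s * Complex.I‖ = Real.exp (Real.log ‖1 + s * Complex.I‖ / 2) := by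
    rw [Real.exp_half, Real.exp_log (norm_pos_iff.mpr hne)]
  rw [e, sqrt_eq_exp (mul_ne_zero (by exact_mod_cast hc.ne') hne), Complex.log_ofReal_mul hc hne,
    h1, h2, ← Real.exp_add, Complex.ofReal_exp, ← Complex.exp_add, Complex.log]
  congr 1
  push_cast
  ring

theorem abs_arg_le (s : ℝ) : |(1 + s * Complex.I).arg| ≤ |s| := by
  have hre : 0 < (1 + s * Complex.I).re := by simp
  have h1 := Complex.abs_arg_lt_pi_div_two_iff.mpr (Or.inl hre)
  have h2 := Complex.tan_arg (1 + s * Complex.I)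
  simp only [Complex.add_im, Complex.one_im, Complex.mul_im, Complex.ofReal_re, Complex.I_im,
    mul_one, Complex.ofReal_im, Complex.I_re, mul_zero, add_zero, zero_add, Complex.add_re,
    Complex.one_re, Complex.mul_re, sub_self, div_one] at h2
  have h3 := Real.le_tan (abs_nonneg _) h1
  refine h3.trans (le_of_eq ?_)
  rcases abs_cases (1 + s * Complex.I).arg with ⟨h, h'⟩ | ⟨h, h'⟩
  · rw [h, h2]
    rw [h] at h3
    exact (abs_of_nonneg (by linarith)).symm
  · rw [h] at h3 ⊢
    rw [Real.tan_neg, h2] at h3 ⊢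
    exact (abs_of_nonpos (by linarith)).symm

/-- The argument of the elementary factor of `P(τ + iτs) e^{inτs}` at the saddle point `τ`: half of
`arg (1 + is)` from the square root, and the odd part of the exponent. -/
noncomputable def phase (N s : ℝ) : ℝ := (1 + s * Complex.I).arg / 2 + N * s ^ 3 / (1 + s ^ 2)

theorem phase_sq_le (N s : ℝ) :
    phase N s ^ 2 / 2 ≤ s ^ 2 / 4 + N ^ 2 * s ^ 6 := by
  have h1 : ((1 + s * Complex.I).arg / 2) ^ 2 ≤ s ^ 2 / 4 := by
    have := sq_le_sq.mpr (abs_arg_le s)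
    linarith
  have h2 : (N * s ^ 3 / (1 + s ^ 2)) ^ 2 ≤ N ^ 2 * s ^ 6 := by
    rw [div_pow, show N ^ 2 * s ^ 6 = (N * s ^ 3) ^ 2 by ring]
    exact div_le_self (by positivity) (one_le_pow₀ (by nlinarith))
  unfold phase
  nlinarith [sq_nonneg ((1 + s * Complex.I).arg / 2 - N * s ^ 3 / (1 + s ^ 2))]

/-- The elementary factor at `s = 0`: `√(τ/2π) e^{2N - nτ}` with `τ = π²/(6N)`. -/
noncomputable def scale (n : ℕ) (N : ℝ) : ℝ :=
  √(Real.pi ^ 2 / (6 * N) / (2 * Real.pi)) * Real.exp (2 * N - n * (Real.pi ^ 2 / (6 * N)))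

/-- With `N² = (π²/6)(n - 1/24)` and `τ = π²/(6N)`, the linear terms in `s` of the exponent
`π²/(6z) - z/24 + inτs` at `z = τ(1 + is)` cancel. It equals
`2N - nτ - N s²/(1 + s²) + i N s³/(1 + s²)`. -/
theorem P_eq {n : ℕ} {N : ℝ} (hN : 0 < N) (hn : N ^ 2 = Real.pi ^ 2 / 6 * (n - 1 / 24)) {τ : ℝ}
    (hτ : τ = Real.pi ^ 2 / (6 * N)) (s : ℝ) :
    P (τ + (τ * s : ℝ) * Complex.I) * Complex.exp (n * ((τ * s : ℝ) * Complex.I)) =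
      ((scale n N * (√‖1 + s * Complex.I‖ * Real.exp (-(N * s ^ 2 / (1 + s ^ 2)))) : ℝ) : ℂ) *
        (Complex.exp (phase N s * Complex.I) *
          P (4 * Real.pi ^ 2 / (τ + (τ * s : ℝ) * Complex.I))) := by
  have hτ0 : 0 < τ := by rw [hτ]; positivity
  have hz : 0 < (τ + (τ * s : ℝ) * Complex.I : ℂ).re := by simpa using hτ0
  have hne : (1 + s * Complex.I) ≠ 0 := by
    intro h
    simpa using congrArg Complex.re h
  have hne2 : (1 + s ^ 2 : ℂ) ≠ 0 := by
    have : (1 + s ^ 2 : ℝ) ≠ 0 := by positivity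
    exact_mod_cast this
  rw [P, transform hz, sqrt_polar hτ0, ← P, scale, ← hτ, phase]
  have hex : Complex.exp (Real.pi ^ 2 / (6 * (τ + (τ * s : ℝ) * Complex.I)) -
      (τ + (τ * s : ℝ) * Complex.I) / 24) * Complex.exp (n * ((τ * s : ℝ) * Complex.I)) =
      ((Real.exp (2 * N - n * τ) * Real.exp (-(N * s ^ 2 / (1 + s ^ 2))) : ℝ) : ℂ) *
        Complex.exp ((N * s ^ 3 / (1 + s ^ 2) : ℝ) * Complex.I) := by
    rw [← Real.exp_add, Complex.ofReal_exp, ← Complex.exp_add, ← Complex.exp_add]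
    congr 1
    have hN' : (N : ℂ) ≠ 0 := by exact_mod_cast hN.ne'
    have hτ' : (τ : ℂ) ≠ 0 := by exact_mod_cast hτ0.ne'
    have e1 : (Real.pi : ℂ) ^ 2 = 6 * N * τ := by
      have : Real.pi ^ 2 = 6 * N * τ := by rw [hτ]; field_simp
      exact_mod_cast this
    have e2 : (n : ℂ) * τ = N + τ / 24 := by
      have : (n : ℝ) * τ = N + τ / 24 := by
        have hp : Real.pi ^ 2 / 6 = N * τ := by rw [hτ]; field_simp
        rw [hp] at hn
        have : N * (N + τ / 24) = N * (n * τ) := by linear_combination hn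
        exact (mul_left_cancel₀ hN.ne' this).symm
      exact_mod_cast this
    have e3 : (Real.pi : ℂ) ^ 2 / (6 * (τ + (τ * s : ℝ) * Complex.I)) =
        N * (1 - s * Complex.I) / (1 + s ^ 2) := by
      rw [e1]
      have : (τ + (τ * s : ℝ) * Complex.I : ℂ) = τ * (1 + s * Complex.I) := by push_cast; ring
      rw [this, div_eq_div_iff (by simp [hτ', hne]) hne2]
      linear_combination (6 * N * τ * s ^ 2) * Complex.I_sq
    rw [e3]
    push_cast
    have e4 : (n : ℂ) * (τ * s * Complex.I) = (N + τ / 24) * (s * Complex.I) := by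
      rw [← e2]; ring
    rw [e4, e2]
    field_simp
    ring
  set E1 := Complex.exp (Real.pi ^ 2 / (6 * (τ + (τ * s : ℝ) * Complex.I)) -
      (τ + (τ * s : ℝ) * Complex.I) / 24)
  set E2 := Complex.exp (n * ((τ * s : ℝ) * Complex.I))
  have e5 : Complex.exp (((1 + s * Complex.I).arg / 2 + N * s ^ 3 / (1 + s ^ 2) : ℝ) * Complex.I) =
      Complex.exp (((1 + s * Complex.I).arg / 2 : ℝ) * Complex.I) *
      Complex.exp ((N * s ^ 3 / (1 + s ^ 2) : ℝ) * Complex.I) := by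
    rw [← Complex.exp_add]; congr 1; push_cast; ring
  rw [e5]
  push_cast at hex ⊢
  generalize P (4 * Real.pi ^ 2 / (τ + τ * s * Complex.I)) = Q
  linear_combination ((√(τ / (2 * Real.pi)) : ℂ) * √‖1 + s * Complex.I‖ *
    Complex.exp ((1 + s * Complex.I).arg / 2 * Complex.I) * Q) * hex

/-! ### Bounds on the generating function -/

theorem norm_one_add_mul_I (s : ℝ) : ‖1 + s * Complex.I‖ = √(1 + s ^ 2) := by
  have := Complex.norm_add_mul_I 1 s
  simpa using this

/-- `√‖1 + is‖ = (1 + s²)^{1/4}`. -/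
theorem sqrt_norm_pow_four (s : ℝ) : (√‖1 + s * Complex.I‖) ^ 4 = 1 + s ^ 2 := by
  rw [show (√‖1 + s * Complex.I‖) ^ 4 = ((√‖1 + s * Complex.I‖) ^ 2) ^ 2 by ring,
    Real.sq_sqrt (norm_nonneg _), norm_one_add_mul_I, Real.sq_sqrt (by positivity)]

theorem pi_sq_div_six : 1.6449 ≤ Real.pi ^ 2 / 6 ∧ Real.pi ^ 2 / 6 ≤ 1.645 := by
  constructor <;> nlinarith [Real.pi_gt_d6, Real.pi_lt_d6]

/-- On `z = τ(1 + is)` with `|s| ≤ 1` and `τ ≤ 1/50` the dual point has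
`Re (4π²/z) = 4π²/(τ(1 + s²)) ≥ 100π²`, so the dual factor is negligibly different from `1`. -/
theorem P_near_one {τ s : ℝ} (hτ : 0 < τ) (hτ' : τ ≤ 1 / 50) (hs : s ^ 2 ≤ 1) :
    ‖P (4 * Real.pi ^ 2 / (τ + (τ * s : ℝ) * Complex.I)) - 1‖ ≤ 1 / 1000 := by
  refine norm_P_sub_one_le ?_
  have e : (4 * Real.pi ^ 2 / (τ + (τ * s : ℝ) * Complex.I) : ℂ).re =
      4 * Real.pi ^ 2 / (τ * (1 + s ^ 2)) := by
    rw [show (4 * Real.pi ^ 2 : ℂ) = ((4 * Real.pi ^ 2 : ℝ) : ℂ) by push_cast; rfl,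
      div_eq_mul_inv, Complex.re_ofReal_mul, Complex.inv_re, Complex.normSq_add_mul_I]
    simp only [Complex.add_re, Complex.ofReal_re, Complex.re_ofReal_mul, Complex.I_re, mul_zero,
      add_zero]
    field_simp
  rw [e, le_div_iff₀ (by positivity)]
  have := pi_sq_div_six.1
  have h2 : τ * (1 + s ^ 2) ≤ 1 / 50 * 2 := by gcongr; linarith
  linarith

theorem norm_P_le {n : ℕ} {N τ : ℝ} (hN : 0 < N)
    (hn : N ^ 2 = Real.pi ^ 2 / 6 * (n - 1 / 24)) (hτ : τ = Real.pi ^ 2 / (6 * N))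
    (hτ' : τ ≤ 1 / 50) {s : ℝ} (hs : s ^ 2 ≤ 1) :
    ‖P (τ + (τ * s : ℝ) * Complex.I) * Complex.exp (n * ((τ * s : ℝ) * Complex.I))‖ ≤
      scale n N * (√‖1 + s * Complex.I‖ * Real.exp (-(N * s ^ 2 / (1 + s ^ 2)))) * 1.001 := by
  have hτ0 : 0 < τ := by rw [hτ]; positivity
  have hsc : 0 ≤ scale n N := by unfold scale; positivity
  rw [P_eq hN hn hτ s, norm_mul, Complex.norm_real, Real.norm_of_nonneg (by positivity), norm_mul,
    Complex.norm_exp_ofReal_mul_I, one_mul]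
  gcongr
  have h1 := P_near_one hτ0 hτ' hs
  have h2 := norm_sub_norm_le (P (4 * Real.pi ^ 2 / (τ + (τ * s : ℝ) * Complex.I))) 1
  rw [norm_one] at h2
  linarith

/-- Lower bound for the real part, from `cos φ ≥ 1 - φ²/2` for the phase `φ` and a loss of `1/1000`
for the dual factor. -/
theorem re_P_ge {n : ℕ} {N τ : ℝ} (hN : 0 < N)
    (hn : N ^ 2 = Real.pi ^ 2 / 6 * (n - 1 / 24)) (hτ : τ = Real.pi ^ 2 / (6 * N))
    (hτ' : τ ≤ 1 / 50) {s : ℝ} (hs : s ^ 2 ≤ 1) :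
    scale n N * (√‖1 + s * Complex.I‖ * Real.exp (-(N * s ^ 2 / (1 + s ^ 2)))) *
      (0.999 - (s ^ 2 / 4 + N ^ 2 * s ^ 6)) ≤
    (P (τ + (τ * s : ℝ) * Complex.I) * Complex.exp (n * ((τ * s : ℝ) * Complex.I))).re := by
  have hτ0 : 0 < τ := by rw [hτ]; positivity
  have hsc : 0 ≤ scale n N := by unfold scale; positivity
  rw [P_eq hN hn hτ s, Complex.re_ofReal_mul]
  gcongr
  have h1 := P_near_one hτ0 hτ' hs
  set Q := P (4 * Real.pi ^ 2 / (τ + (τ * s : ℝ) * Complex.I))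
  have h2 := phase_sq_le N s
  have h3 := Real.one_sub_sq_div_two_le_cos (x := phase N s)
  have h4 : Complex.exp (phase N s * Complex.I) * Q =
      Complex.exp (phase N s * Complex.I) + Complex.exp (phase N s * Complex.I) * (Q - 1) := by ring
  have h5 := Complex.abs_re_le_norm (Complex.exp (phase N s * Complex.I) * (Q - 1))
  rw [norm_mul, Complex.norm_exp_ofReal_mul_I, one_mul] at h5
  have h6 := (abs_le.mp h5).1
  rw [h4, Complex.add_re, Complex.exp_ofReal_mul_I_re]
  linarith

/-- On the far arc `τ ≤ |θ| ≤ π` there is a saving of `e^{-N/4}` over `θ = 0`. Indeed the exponent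
`0.45/τ = 0.45 · 6N/π²` of `delta_ge` exceeds `N/4`. -/
theorem norm_P_far {n : ℕ} {N τ : ℝ} (hN : 0 < N)
    (hn : N ^ 2 = Real.pi ^ 2 / 6 * (n - 1 / 24)) (hτ : τ = Real.pi ^ 2 / (6 * N))
    (hτ' : τ ≤ 1 / 50) {θ : ℝ} (h2 : τ ≤ |θ|) (h3 : |θ| ≤ Real.pi) :
    ‖P (τ + θ * Complex.I) * Complex.exp (n * (θ * Complex.I))‖ ≤
      scale n N * 1.001 * Real.exp (-(N / 4)) := by
  have hτ0 : 0 < τ := by rw [hτ]; positivity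
  have h0 := norm_P_le hN hn hτ hτ' (s := 0) (by norm_num)
  simp only [mul_zero, Complex.ofReal_zero, zero_mul, add_zero, Complex.exp_zero, mul_one,
    norm_one, Real.sqrt_one, ne_eq, OfNat.ofNat_ne_zero, not_false_eq_true, zero_pow, zero_div,
    neg_zero, Real.exp_zero] at h0
  have hexp : ‖Complex.exp (n * (θ * Complex.I))‖ = 1 := by
    rw [show (n * (θ * Complex.I) : ℂ) = ((n * θ : ℝ) : ℂ) * Complex.I by push_cast; ring,
      Complex.norm_exp_ofReal_mul_I]
  rw [norm_mul, hexp, mul_one]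
  have hz : 0 < (τ + θ * Complex.I : ℂ).re := by simpa using hτ0
  have hq := norm_exp_neg_lt hz
  have hb := norm_eulerProd_le hq
  have hnq : ‖Complex.exp (-(τ + θ * Complex.I))‖ = Real.exp (-τ) := by
    rw [Complex.norm_exp]; simp
  have hE := eulerProd_ne_zero hq
  rw [hnq] at hb
  have hr : ‖((Real.exp (-τ) : ℝ) : ℂ)‖ < 1 := by
    rw [Complex.norm_real, Real.norm_of_nonneg (Real.exp_pos _).le, Real.exp_lt_one_iff]; linarith
  have hE' := eulerProd_ne_zero hr
  have hd := delta_ge hτ0 hτ' (θ := -θ) (by rwa [abs_neg]) (by rwa [abs_neg])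
  have eq : (Real.exp (-τ) * Complex.exp ((-θ : ℝ) * Complex.I) : ℂ) =
      Complex.exp (-(τ + θ * Complex.I)) := by
    rw [Complex.ofReal_exp, ← Complex.exp_add]; congr 1; push_cast; ring
  rw [eq] at hd
  have hN4 : N / 4 ≤ 0.45 / τ := by
    rw [hτ, div_div_eq_mul_div, le_div_iff₀ (by positivity)]
    have := pi_sq_div_six.2
    nlinarith
  have hPt : ‖P τ‖ = ‖eulerProd (Real.exp (-τ) : ℝ)‖⁻¹ := by
    rw [P, norm_inv]; push_cast; rfl
  have hPq : ‖P (τ + θ * Complex.I)‖ = ‖eulerProd (Complex.exp (-(τ + θ * Complex.I)))‖⁻¹ := by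
    rw [P, norm_inv]
  calc ‖P (τ + θ * Complex.I)‖ ≤ ‖P τ‖ * Real.exp (-(N / 4)) := by
        rw [hPt, hPq, inv_mul_eq_div, ← one_div, div_le_div_iff₀ (norm_pos_iff.mpr hE)
          (norm_pos_iff.mpr hE'), one_mul, mul_comm]
        refine hb.trans ?_
        gcongr
        linarith
    _ ≤ _ := by gcongr

/-! ### Lower bound for the integrand -/

/-- A lower bound for the integrand in the rescaled angle `s = θ/τ`, up to the factor
`scale n N * τ²/2`. The first part is the Gaussian main term, with weight `s²` coming from
`1 - cos θ`; the summand `-4s⁴` only makes it nonpositive for `|s| ≥ 1/2`, so that the bound extends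
to the whole line. The second part bounds the loss `φ²/2` from the phase, with the weaker Gaussian
`e^{-0.8Ns²}` accounting for `s²/(1 + s²) ≥ 0.8s²` when `s² ≤ 1/4`. -/
noncomputable def profile (N s : ℝ) : ℝ :=
  0.998 * ((s ^ 2 - 4 * s ^ 4) * Real.exp (-(N * s ^ 2))) -
    1.06 * ((s ^ 4 / 4 + N ^ 2 * s ^ 8) * Real.exp (-(0.8 * N * s ^ 2)))

theorem profile_nonpos {N s : ℝ} (hs : 1 / 4 ≤ s ^ 2) : profile N s ≤ 0 := by
  unfold profile
  have h1 : (s ^ 2 - 4 * s ^ 4) * Real.exp (-(N * s ^ 2)) ≤ 0 := by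
    refine mul_nonpos_of_nonpos_of_nonneg ?_ (Real.exp_pos _).le
    nlinarith [sq_nonneg s]
  have h2 : 0 ≤ (s ^ 4 / 4 + N ^ 2 * s ^ 8) * Real.exp (-(0.8 * N * s ^ 2)) := by positivity
  linarith

theorem sqrt_norm_bounds {s b : ℝ} (hb : 0 ≤ b) (hs : 1 + s ^ 2 ≤ b ^ 4) :
    1 ≤ √‖1 + s * Complex.I‖ ∧ √‖1 + s * Complex.I‖ ≤ b := by
  have h := sqrt_norm_pow_four s
  constructor
  · refine le_of_pow_le_pow_left₀ (n := 4) (by norm_num) (Real.sqrt_nonneg _) ?_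
    rw [h]; nlinarith [sq_nonneg s]
  · refine le_of_pow_le_pow_left₀ (n := 4) (by norm_num) hb ?_
    rwa [h]

theorem integrand_ge_near {n : ℕ} {N τ : ℝ} (hN : 0 < N)
    (hn : N ^ 2 = Real.pi ^ 2 / 6 * (n - 1 / 24)) (hτ : τ = Real.pi ^ 2 / (6 * N))
    (hτ' : τ ≤ 1 / 50) {s : ℝ} (hs : s ^ 2 ≤ 1 / 4) :
    scale n N * (τ ^ 2 / 2 * profile N s) ≤ integrand n τ (τ * s) := by
  have hτ0 : 0 < τ := by rw [hτ]; positivity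
  have hsc : 0 ≤ scale n N := by unfold scale; positivity
  have h1 := re_P_ge hN hn hτ hτ' (s := s) (by linarith)
  obtain ⟨hρ1, hρ2⟩ := sqrt_norm_bounds (s := s) (b := 1.06) (by norm_num) (by norm_num; linarith)
  have hc1 : 1 - Real.cos (τ * s) ≤ τ ^ 2 / 2 * s ^ 2 := by
    have := Real.one_sub_sq_div_two_le_cos (x := τ * s)
    linarith [mul_pow τ s 2]
  have hts : (τ * s) ^ 2 ≤ (1 / 50) ^ 2 * (1 / 4) := by rw [mul_pow]; gcongr
  have hc2 : 0.9995 * (τ ^ 2 / 2 * s ^ 2) ≤ 1 - Real.cos (τ * s) := by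
    have hb := Real.cos_bound (x := τ * s) (by
      rw [← sq_le_one_iff_abs_le_one]; linarith)
    have := (abs_le.mp hb).2
    have h4 : |τ * s| ^ 4 = (τ * s) ^ 2 * (τ * s) ^ 2 := by
      rw [← sq_abs]; ring
    rw [h4] at this
    have h5 : (τ * s) ^ 2 * (τ * s) ^ 2 ≤ (1 / 50) ^ 2 * (1 / 4) * (τ * s) ^ 2 := by gcongr
    have h6 := mul_pow τ s 2
    nlinarith [sq_nonneg (τ * s)]
  have hc0 : 0 ≤ 1 - Real.cos (τ * s) := by linarith [Real.cos_le_one (τ * s)]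
  have hw1 : Real.exp (-(N * s ^ 2)) ≤ Real.exp (-(N * s ^ 2 / (1 + s ^ 2))) := by
    gcongr
    exact div_le_self (by positivity) (by nlinarith [sq_nonneg s])
  have hw2 : Real.exp (-(N * s ^ 2 / (1 + s ^ 2))) ≤ Real.exp (-(0.8 * N * s ^ 2)) := by
    gcongr
    rw [le_div_iff₀ (by positivity)]
    have : 0 ≤ N * s ^ 2 := by positivity
    nlinarith
  unfold integrand
  refine le_trans ?_ (mul_le_mul_of_nonneg_right h1 hc0)
  rw [mul_assoc, mul_assoc]
  refine mul_le_mul_of_nonneg_left ?_ hsc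
  set ρ := √‖1 + s * Complex.I‖
  set w := Real.exp (-(N * s ^ 2 / (1 + s ^ 2)))
  set c := 1 - Real.cos (τ * s)
  set T := s ^ 2 / 4 + N ^ 2 * s ^ 6 with hT
  have hT0 : 0 ≤ T := by positivity
  have hw0 : 0 < w := Real.exp_pos _
  have a1 : 0.998 * (τ ^ 2 / 2 * ((s ^ 2 - 4 * s ^ 4) * Real.exp (-(N * s ^ 2)))) ≤
      0.999 * (ρ * w * c) := by
    have b1 : 1 * Real.exp (-(N * s ^ 2)) * (0.9995 * (τ ^ 2 / 2 * s ^ 2)) ≤ ρ * w * c := by gcongr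
    have b2 : 0 ≤ τ ^ 2 / 2 * s ^ 2 * Real.exp (-(N * s ^ 2)) := by positivity
    have b3 : 0 ≤ τ ^ 2 / 2 * s ^ 4 * Real.exp (-(N * s ^ 2)) := by positivity
    nlinarith
  have a2 : ρ * w * c * T ≤
      1.06 * Real.exp (-(0.8 * N * s ^ 2)) * (τ ^ 2 / 2 * s ^ 2) * T := by gcongr
  have e2 : τ ^ 2 / 2 * profile N s =
      0.998 * (τ ^ 2 / 2 * ((s ^ 2 - 4 * s ^ 4) * Real.exp (-(N * s ^ 2)))) -
      1.06 * Real.exp (-(0.8 * N * s ^ 2)) * (τ ^ 2 / 2 * s ^ 2) * T := by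
    rw [profile, hT]; ring
  rw [e2]
  rw [show ρ * w * ((0.999 - T) * c) = 0.999 * (ρ * w * c) - ρ * w * c * T by ring]
  linarith

/-- The profile bound on the whole period. For `s² > 1/4` the profile is nonpositive, and the
integrand is bounded in absolute value by the first error term if `s² ≤ 1` and by the second one on
the far arc. -/
theorem integrand_ge {n : ℕ} {N τ : ℝ} (hN : 0 < N)
    (hn : N ^ 2 = Real.pi ^ 2 / 6 * (n - 1 / 24)) (hτ : τ = Real.pi ^ 2 / (6 * N))
    (hτ' : τ ≤ 1 / 50) {s : ℝ} (hs : |τ * s| ≤ Real.pi) :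
    scale n N * (τ ^ 2 / 2 * profile N s -
      (τ ^ 2 * Real.exp (-(N / 5)) + 3 * Real.exp (-(N / 4)))) ≤ integrand n τ (τ * s) := by
  have hτ0 : 0 < τ := by rw [hτ]; positivity
  have hsc : 0 ≤ scale n N := by unfold scale; positivity
  have he5 := Real.exp_pos (-(N / 5))
  have he4 := Real.exp_pos (-(N / 4))
  have hc0 : 0 ≤ 1 - Real.cos (τ * s) := by linarith [Real.cos_le_one (τ * s)]
  by_cases h1 : s ^ 2 ≤ 1 / 4
  · refine le_trans ?_ (integrand_ge_near hN hn hτ hτ' h1)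
    gcongr
    have : 0 < τ ^ 2 * Real.exp (-(N / 5)) := by positivity
    linarith
  push Not at h1
  have hp : scale n N * (τ ^ 2 / 2 * profile N s) ≤ 0 :=
    mul_nonpos_of_nonneg_of_nonpos hsc
      (mul_nonpos_of_nonneg_of_nonpos (by positivity) (profile_nonpos h1.le))
  rw [mul_sub]
  set G := P (τ + (τ * s : ℝ) * Complex.I) * Complex.exp (n * ((τ * s : ℝ) * Complex.I)) with hG
  suffices h : ‖G‖ * (1 - Real.cos (τ * s)) ≤
      scale n N * (τ ^ 2 * Real.exp (-(N / 5)) + 3 * Real.exp (-(N / 4))) by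
    have h2 := (abs_le.mp (Complex.abs_re_le_norm G)).1
    have h3 := mul_le_mul_of_nonneg_right h2 hc0
    unfold integrand
    rw [← hG]
    linarith
  by_cases h2 : s ^ 2 ≤ 1
  · have h3 := norm_P_le hN hn hτ hτ' h2
    rw [← hG] at h3
    have hρ := (sqrt_norm_bounds (s := s) (b := 1.19) (by norm_num) (by norm_num; linarith)).2
    have hw : Real.exp (-(N * s ^ 2 / (1 + s ^ 2))) ≤ Real.exp (-(N / 5)) := by
      refine Real.exp_le_exp.mpr (neg_le_neg ?_)
      rw [div_le_div_iff₀ (by norm_num) (by positivity)]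
      nlinarith
    have hc1 : 1 - Real.cos (τ * s) ≤ τ ^ 2 / 2 := by
      have := Real.one_sub_sq_div_two_le_cos (x := τ * s)
      have h4 : (τ * s) ^ 2 ≤ τ ^ 2 := by rw [mul_pow]; exact mul_le_of_le_one_right (by positivity) h2
      linarith
    calc ‖G‖ * (1 - Real.cos (τ * s)) ≤
        (scale n N * (1.19 * Real.exp (-(N / 5))) * 1.001) * (τ ^ 2 / 2) := by
          refine mul_le_mul (h3.trans ?_) hc1 hc0 (by positivity)
          gcongr
      _ ≤ scale n N * (τ ^ 2 * Real.exp (-(N / 5))) := by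
          have : 0 ≤ scale n N * (τ ^ 2 * Real.exp (-(N / 5))) := by positivity
          nlinarith
      _ ≤ _ := by gcongr; linarith
  · push Not at h2
    have h3 : τ ≤ |τ * s| := by
      rw [abs_mul, abs_of_pos hτ0]
      exact le_mul_of_one_le_right hτ0.le ((one_lt_sq_iff_one_lt_abs s).mp h2).le
    have h4 := norm_P_far hN hn hτ hτ' h3 hs
    rw [← hG] at h4
    calc ‖G‖ * (1 - Real.cos (τ * s)) ≤ scale n N * 1.001 * Real.exp (-(N / 4)) * 2 := by
          refine mul_le_mul h4 ?_ hc0 (by positivity)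
          linarith [Real.neg_one_le_cos (τ * s)]
      _ ≤ scale n N * (3 * Real.exp (-(N / 4))) := by
          have : 0 ≤ scale n N * Real.exp (-(N / 4)) := by positivity
          nlinarith
      _ ≤ _ := by gcongr; nlinarith [sq_nonneg τ]

/-! ### Gaussian moments -/

theorem integrable_moment (k : ℕ) {b : ℝ} (hb : 0 < b) :
    MeasureTheory.Integrable fun s : ℝ ↦ s ^ (2 * k) * Real.exp (-(b * s ^ 2)) := by
  have := integrable_rpow_mul_exp_neg_mul_sq hb (s := (2 * k : ℕ)) (by
    have : (0 : ℝ) ≤ ((2 * k : ℕ) : ℝ) := by positivity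
    linarith)
  simpa only [Real.rpow_natCast, neg_mul] using this

theorem integral_moment (k : ℕ) {b : ℝ} (hb : 0 < b) :
    ∫ s : ℝ, s ^ (2 * k) * Real.exp (-(b * s ^ 2)) =
      b ^ (-((k : ℝ) + 1 / 2)) * Real.Gamma (k + 1 / 2) := by
  have h1 := integral_comp_abs (f := fun s : ℝ ↦ s ^ (2 * k) * Real.exp (-(b * s ^ 2)))
  simp only [sq_abs, pow_mul] at h1 ⊢
  rw [h1]
  have h2 := integral_rpow_mul_exp_neg_mul_rpow (p := 2) (q := (2 * k : ℕ)) (b := b)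
    (by norm_num) (by
      have : (0 : ℝ) ≤ ((2 * k : ℕ) : ℝ) := by positivity
      linarith) hb
  simp only [Real.rpow_natCast, Real.rpow_ofNat, pow_mul, neg_mul] at h2
  rw [h2]
  push_cast
  rw [show ((2 : ℝ) * k + 1) / 2 = k + 1 / 2 by ring,
    show -((2 : ℝ) * k + 1) / 2 = -((k : ℝ) + 1 / 2) by ring]
  ring

/-- The moment recursion `M_{k+1} = (k + 1/2)/b · M_k`. -/
theorem integral_moment_succ (k : ℕ) {b : ℝ} (hb : 0 < b) :
    ∫ s : ℝ, s ^ (2 * (k + 1)) * Real.exp (-(b * s ^ 2)) =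
      (k + 1 / 2) / b * ∫ s : ℝ, s ^ (2 * k) * Real.exp (-(b * s ^ 2)) := by
  rw [integral_moment _ hb, integral_moment _ hb]
  push_cast
  rw [show (k : ℝ) + 1 + 1 / 2 = (k + 1 / 2) + 1 by ring, Real.Gamma_add_one (by positivity),
    neg_add, Real.rpow_add hb, Real.rpow_neg_one]
  field_simp

/-- The moment is `√π / 2 · N^{-3/2}`, and `√π / 2 · √N ≥ 8` for `N ≥ 100`. -/
theorem moment_one_ge {N : ℝ} (hN : 100 ≤ N) :
    8 / N ^ 2 ≤ ∫ s : ℝ, s ^ 2 * Real.exp (-(N * s ^ 2)) := by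
  have hN0 : 0 < N := by linarith
  have h := integral_moment 1 hN0
  simp only [mul_one, Nat.cast_one] at h
  have h1 : N ^ (-((1 : ℝ) + 1 / 2)) = √N / N ^ 2 := by
    rw [show -((1 : ℝ) + 1 / 2) = 1 / 2 - (2 : ℕ) by norm_num, Real.rpow_sub_natCast hN0.ne',
      Real.sqrt_eq_rpow]
  have h2 : Real.Gamma (1 + 1 / 2) = √Real.pi / 2 := by
    rw [add_comm, Real.Gamma_add_one (by norm_num), Real.Gamma_one_half_eq]; ring
  rw [h, h1, h2, div_mul_eq_mul_div]
  gcongr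
  have h3 : 10 ≤ √N := Real.le_sqrt_of_sq_le (by norm_num; linarith)
  have h4 : 1.7 ≤ √Real.pi := Real.le_sqrt_of_sq_le (by norm_num; linarith [Real.pi_gt_d2])
  nlinarith

/-- The ratio is `0.8^{-3/2} = 1.3975…`. -/
theorem moment_one_le {N : ℝ} (hN : 0 < N) :
    ∫ s : ℝ, s ^ 2 * Real.exp (-(0.8 * N * s ^ 2)) ≤
      1.4 * ∫ s : ℝ, s ^ 2 * Real.exp (-(N * s ^ 2)) := by
  have h := integral_moment 1 hN
  have h' := integral_moment 1 (b := 0.8 * N) (by positivity)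
  simp only [mul_one, Nat.cast_one] at h h'
  rw [h, h', Real.mul_rpow (by norm_num) hN.le, mul_assoc]
  have hG : 0 < Real.Gamma (1 + 1 / 2) := Real.Gamma_pos_of_pos (by norm_num)
  gcongr
  refine le_of_pow_le_pow_left₀ (n := 2) (by norm_num) (by norm_num) ?_
  rw [← Real.rpow_mul_natCast (by norm_num), show -((1 : ℝ) + 1 / 2) * (2 : ℕ) = ((-3 : ℤ) : ℝ) by norm_num,
    Real.rpow_intCast]
  norm_num

theorem integrable_profile {N : ℝ} (hN : 0 < N) : MeasureTheory.Integrable (profile N) := by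
  have h1 := integrable_moment 1 hN
  have h2 := integrable_moment 2 hN
  have h3 := integrable_moment 2 (b := 0.8 * N) (by positivity)
  have h4 := integrable_moment 4 (b := 0.8 * N) (by positivity)
  convert (((h1.sub (h2.const_mul 4)).const_mul 0.998).sub
    (((h3.div_const 4).add (h4.const_mul (N ^ 2))).const_mul 1.06)) using 1
  ext s
  simp only [profile, Pi.sub_apply, Pi.add_apply]
  ring

/-- All moments of the profile are multiples of the second moments with exponents `N` and `0.8N`. Those
other than the main term are smaller by a factor `N`, so they cost less than half of it when
`N ≥ 100`. -/
theorem integral_profile_ge {N : ℝ} (hN : 100 ≤ N) :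
    1 / 2 * ∫ s : ℝ, s ^ 2 * Real.exp (-(N * s ^ 2)) ≤ ∫ s, profile N s := by
  have hN0 : 0 < N := by linarith
  have hN8 : 0 < 0.8 * N := by linarith
  have h1 := integrable_moment 1 hN0
  have h2 := integrable_moment 2 hN0
  have h3 := integrable_moment 2 hN8
  have h4 := integrable_moment 4 hN8
  have e : ∫ s, profile N s =
      (0.998 * (∫ s : ℝ, s ^ (2 * 1) * Real.exp (-(N * s ^ 2))) -
        3.992 * ∫ s : ℝ, s ^ (2 * 2) * Real.exp (-(N * s ^ 2))) -
      (0.265 * (∫ s : ℝ, s ^ (2 * 2) * Real.exp (-(0.8 * N * s ^ 2))) +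
        1.06 * N ^ 2 * ∫ s : ℝ, s ^ (2 * 4) * Real.exp (-(0.8 * N * s ^ 2))) := by
    have hp : profile N = fun s ↦ (0.998 * (s ^ (2 * 1) * Real.exp (-(N * s ^ 2))) -
        3.992 * (s ^ (2 * 2) * Real.exp (-(N * s ^ 2)))) -
        (0.265 * (s ^ (2 * 2) * Real.exp (-(0.8 * N * s ^ 2))) +
          1.06 * N ^ 2 * (s ^ (2 * 4) * Real.exp (-(0.8 * N * s ^ 2)))) := by
      ext s
      simp only [profile]
      ring
    rw [hp, MeasureTheory.integral_sub, MeasureTheory.integral_sub, MeasureTheory.integral_add,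
      MeasureTheory.integral_const_mul, MeasureTheory.integral_const_mul,
      MeasureTheory.integral_const_mul, MeasureTheory.integral_const_mul]
    · exact h3.const_mul _
    · exact h4.const_mul _
    · exact h1.const_mul _
    · exact h2.const_mul _
    · exact (h1.const_mul _).sub (h2.const_mul _)
    · exact (h3.const_mul _).add (h4.const_mul _)
  have m2 := integral_moment_succ 1 hN0
  have m2' := integral_moment_succ 1 hN8
  have m3' := integral_moment_succ 2 hN8
  have m4' := integral_moment_succ 3 hN8
  have hle := moment_one_le hN0
  have hge := moment_one_ge hN
  norm_num at e m2 m2' m3' m4' hle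
  rw [m4', m3', m2', m2] at e
  rw [e]
  set g := ∫ s : ℝ, s ^ 2 * Real.exp (-(N * s ^ 2))
  have hg : 0 < g := lt_of_lt_of_le (by positivity) hge
  generalize (∫ s : ℝ, s ^ 2 * Real.exp (-(4 / 5 * N * s ^ 2))) = g' at hle ⊢
  have r1 : 3 / 2 / N * g = 3 / 2 * (g / N) := by field_simp
  have r2 : 3 / 2 / (4 / 5 * N) * g' = 15 / 8 * (g' / N) := by
    field_simp; norm_num; ring
  have r3 : N ^ 2 * (7 / 2 / (4 / 5 * N) * (5 / 2 / (4 / 5 * N) * (15 / 8 * (g' / N)))) =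
      13125 / 512 * (g' / N) := by
    field_simp; norm_num; ring
  have b1 : g / N ≤ g / 100 := by gcongr
  have b2 : g' / N ≤ 7 / 5 * (g / N) := by rw [← mul_div_assoc]; gcongr
  rw [r2, r1, mul_assoc (53 / 50 : ℝ), r3]
  linarith

/-! ### Log-concavity for large arguments -/

/-- With `c = π²/6` and `τ = c/N`: the error of `integrand_ge`, integrated over a period, is at most the
lower bound `2τ³/N²` for the main term, both in units of `scale n N`. -/
theorem error_le {N c : ℝ} (hN : 100 ≤ N) (hc : 1.6449 ≤ c) (hc' : c ≤ 1.645) :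
    2 * Real.pi * ((c / N) ^ 2 * Real.exp (-(N / 5)) + 3 * Real.exp (-(N / 4))) ≤
      2 * (c / N) ^ 3 / N ^ 2 := by
  have hN0 : 0 < N := by linarith
  -- `x ≤ exp (x - 1)` at `x = N / 100` turns powers of `N` into exponentials
  have h0 : N / 100 ≤ Real.exp (N / 100 - 1) := by
    linarith [Real.add_one_le_exp (N / 100 - 1)]
  have hexp (k : ℕ) : 2.718 ^ k ≤ Real.exp k := by
    rw [← mul_one (k : ℝ), Real.exp_nat_mul]
    gcongr
    linarith [Real.exp_one_gt_d9]
  have h1 : N ^ 3 * Real.exp (-(N / 5)) ≤ 0.1 := by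
    calc N ^ 3 * Real.exp (-(N / 5)) = 100 ^ 3 * ((N / 100) ^ 3 * Real.exp (-(N / 5))) := by ring
      _ ≤ 100 ^ 3 * (Real.exp (N / 100 - 1) ^ 3 * Real.exp (-(N / 5))) := by gcongr
      _ = 100 ^ 3 * Real.exp (3 * (N / 100 - 1) + -(N / 5)) := by
        rw [Real.exp_add, ← Real.exp_nat_mul]; norm_num
      _ ≤ 100 ^ 3 * Real.exp (-(20 : ℕ)) := by
        gcongr; push_cast; linarith
      _ ≤ 100 ^ 3 * (2.718 ^ 20)⁻¹ := by
        rw [Real.exp_neg]; gcongr; exact hexp 20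
      _ ≤ 0.1 := by norm_num
  have h2 : N ^ 5 * Real.exp (-(N / 4)) ≤ 0.2 := by
    calc N ^ 5 * Real.exp (-(N / 4)) = 100 ^ 5 * ((N / 100) ^ 5 * Real.exp (-(N / 4))) := by ring
      _ ≤ 100 ^ 5 * (Real.exp (N / 100 - 1) ^ 5 * Real.exp (-(N / 4))) := by gcongr
      _ = 100 ^ 5 * Real.exp (5 * (N / 100 - 1) + -(N / 4)) := by
        rw [Real.exp_add, ← Real.exp_nat_mul]; norm_num
      _ ≤ 100 ^ 5 * Real.exp (-(25 : ℕ)) := by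
        gcongr; push_cast; linarith
      _ ≤ 100 ^ 5 * (2.718 ^ 25)⁻¹ := by
        rw [Real.exp_neg]; gcongr; exact hexp 25
      _ ≤ 0.2 := by norm_num
  rw [div_pow c N 3, div_pow, mul_div_assoc', div_div, le_div_iff₀ (by positivity)]
  have e : 2 * Real.pi * (c ^ 2 / N ^ 2 * Real.exp (-(N / 5)) + 3 * Real.exp (-(N / 4))) *
      (N ^ 3 * N ^ 2) = 2 * Real.pi * (c ^ 2 * (N ^ 3 * Real.exp (-(N / 5))) +
        3 * (N ^ 5 * Real.exp (-(N / 4)))) := by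
    field_simp
  rw [e]
  calc _ ≤ 2 * 3.15 * (1.645 ^ 2 * 0.1 + 3 * 0.2 : ℝ) := by
        gcongr
        exact Real.pi_lt_d2.le
    _ ≤ 2 * (1.6449 : ℝ) ^ 3 := by norm_num
    _ ≤ 2 * c ^ 3 := by gcongr

theorem continuous_integrand (n : ℕ) {τ : ℝ} (hτ : 0 < τ) : Continuous (integrand n τ) := by
  rw [show integrand n τ = fun θ ↦ ∑' m : ℕ, (p m : ℝ) * Real.exp (-(m * τ)) *
      (Real.cos (((n - m : ℤ) : ℝ) * θ) * (1 - Real.cos θ)) from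
    funext fun θ ↦ (hasSum_integrand n hτ θ).tsum_eq.symm]
  refine continuous_tsum (fun m ↦ by fun_prop) ((summable_a hτ).mul_right 2) fun m θ ↦ ?_
  rw [norm_mul, Real.norm_of_nonneg (by positivity), norm_mul]
  gcongr
  have h1 := Real.abs_cos_le_one (((n - m : ℤ) : ℝ) * θ)
  have h2 : ‖1 - Real.cos θ‖ ≤ 2 := by
    rw [Real.norm_eq_abs, abs_le]
    constructor <;> linarith [Real.neg_one_le_cos θ, Real.cos_le_one θ]
  calc _ ≤ 1 * (2 : ℝ) := by gcongr; exact h1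
    _ = 2 := by norm_num

/-- The profile is nonpositive outside `[-1/2, 1/2]`, so truncating the integral increases it. -/
theorem integral_profile_le {N a : ℝ} (hN : 0 < N) (ha : 1 / 2 ≤ a) :
    ∫ s, profile N s ≤ ∫ s in (-a)..a, profile N s := by
  have hi := integrable_profile hN
  rw [intervalIntegral.integral_of_le (by linarith),
    ← MeasureTheory.integral_add_compl (s := Set.Ioc (-a) a) measurableSet_Ioc hi]
  have : ∫ s in (Set.Ioc (-a) a)ᶜ, profile N s ≤ 0 := by
    refine MeasureTheory.setIntegral_nonpos measurableSet_Ioc.compl fun s hs ↦ profile_nonpos ?_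
    simp only [Set.mem_compl_iff, Set.mem_Ioc, not_and_or, not_lt, not_le] at hs
    rcases hs with hs | hs <;> nlinarith
  linarith

theorem integral_integrand_nonneg {n : ℕ} {N τ : ℝ} (hN : 100 ≤ N)
    (hn : N ^ 2 = Real.pi ^ 2 / 6 * (n - 1 / 24)) (hτ : τ = Real.pi ^ 2 / (6 * N)) :
    0 ≤ ∫ θ in (-Real.pi)..Real.pi, integrand n τ θ := by
  have hN0 : 0 < N := by linarith
  obtain ⟨hc, hc'⟩ := pi_sq_div_six
  have hτc : τ = Real.pi ^ 2 / 6 / N := by rw [hτ, div_div]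
  have hτ0 : 0 < τ := by rw [hτ]; positivity
  have hτ' : τ ≤ 1 / 50 := by
    rw [hτc, div_le_iff₀ hN0]; linarith
  set K := τ ^ 2 * Real.exp (-(N / 5)) + 3 * Real.exp (-(N / 4)) with hK
  have hcont : Continuous (profile N) := by unfold profile; fun_prop
  have h1 : ∫ θ in (-Real.pi)..Real.pi, scale n N * (τ ^ 2 / 2 * profile N (θ / τ) - K) ≤
      ∫ θ in (-Real.pi)..Real.pi, integrand n τ θ := by
    refine intervalIntegral.integral_mono_on (by linarith [Real.pi_pos])
      (Continuous.intervalIntegrable (by fun_prop) _ _)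
      ((continuous_integrand n hτ0).intervalIntegrable _ _) fun θ hθ ↦ ?_
    have e : τ * (θ / τ) = θ := by field_simp
    have := integrand_ge hN0 hn hτ hτ' (s := θ / τ) (by rw [e]; exact abs_le.2 hθ)
    rwa [e] at this
  refine le_trans ?_ h1
  rw [intervalIntegral.integral_const_mul, intervalIntegral.integral_sub
    (Continuous.intervalIntegrable (by fun_prop) _ _) (by simp),
    intervalIntegral.integral_const_mul, intervalIntegral.integral_comp_div _ hτ0.ne',
    intervalIntegral.integral_const, smul_eq_mul, smul_eq_mul, neg_div]
  have hs : 0 ≤ scale n N := by unfold scale; positivity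
  refine mul_nonneg hs ?_
  have h2 := integral_profile_le hN0 (a := Real.pi / τ) (by
    rw [le_div_iff₀ hτ0]; linarith [Real.pi_gt_three])
  have h3 := integral_profile_ge hN
  have h4 := moment_one_ge hN
  have h5 := error_le hN hc hc'
  rw [← hτc, ← hK] at h5
  have h6 : 4 / N ^ 2 ≤ ∫ s in (-(Real.pi / τ))..(Real.pi / τ), profile N s := by
    have : 4 / N ^ 2 = 1 / 2 * (8 / N ^ 2) := by ring
    linarith
  have h7 : 2 * τ ^ 3 / N ^ 2 ≤
      τ ^ 2 / 2 * (τ * ∫ s in (-(Real.pi / τ))..(Real.pi / τ), profile N s) := by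
    calc 2 * τ ^ 3 / N ^ 2 = τ ^ 2 / 2 * (τ * (4 / N ^ 2)) := by ring
      _ ≤ _ := by gcongr
  linarith

/-- The saddle point belongs to `n + 1 ≥ 6101`, which makes `N ≥ 100`. -/
theorem log_concave_of_large {n : ℕ} (hn : 6100 ≤ n) : p n * p (n + 2) ≤ p (n + 1) ^ 2 := by
  obtain ⟨hc, hc'⟩ := pi_sq_div_six
  have hn' : (6100 : ℝ) ≤ n := by exact_mod_cast hn
  set N := √(Real.pi ^ 2 / 6 * ((n + 1 : ℕ) - 1 / 24)) with hNdef
  have hsq : N ^ 2 = Real.pi ^ 2 / 6 * ((n + 1 : ℕ) - 1 / 24) := by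
    refine Real.sq_sqrt ?_
    push_cast
    have : (0 : ℝ) ≤ n + 1 - 1 / 24 := by linarith
    positivity
  have hN : 100 ≤ N := by
    refine Real.le_sqrt_of_sq_le ?_
    push_cast
    nlinarith
  have h := integral_integrand_nonneg hN hsq rfl
  set τ := Real.pi ^ 2 / (6 * N) with hτ
  have hτ0 : 0 < τ := by positivity
  rw [integral_integrand n hτ0] at h
  have h' := nonneg_of_mul_nonneg_right h Real.pi_pos
  have hE : Real.exp (-(n * τ)) * Real.exp (-((n + 2 : ℕ) * τ)) =
      Real.exp (-((n + 1 : ℕ) * τ)) ^ 2 := by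
    rw [← Real.exp_add, ← Real.exp_nat_mul]
    congr 1
    push_cast
    ring
  have hpos := Real.exp_pos (-((n + 1 : ℕ) * τ))
  set a := (p n : ℝ) * Real.exp (-(n * τ)) with ha
  set b := (p (n + 1) : ℝ) * Real.exp (-((n + 1 : ℕ) * τ)) with hb
  set c := (p (n + 2) : ℝ) * Real.exp (-((n + 2 : ℕ) * τ)) with hcd
  have ha0 : 0 ≤ a := by positivity
  have hb0 : 0 ≤ b := by positivity
  have hc0 : 0 ≤ c := by positivity
  have h3 : a * c ≤ b ^ 2 := by nlinarith [sq_nonneg (a - c)]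
  have h4 : ((p n : ℝ) * p (n + 2)) * Real.exp (-((n + 1 : ℕ) * τ)) ^ 2 ≤
      (p (n + 1) : ℝ) ^ 2 * Real.exp (-((n + 1 : ℕ) * τ)) ^ 2 := by
    calc _ = a * c := by rw [← hE, ha, hcd]; ring
      _ ≤ b ^ 2 := h3
      _ = _ := by rw [hb]; ring
  exact_mod_cast le_of_mul_le_mul_right h4 (by positivity)

/-! ### A computation with one big number -/

set_option exponentiation.threshold 400 in
/-- `p(m) e^{-mτ} ≤ P(τ)` at the saddle point `τ` of `6112`, where `N < 100.5`, gives
`p(m) ≤ 1.001 e^{2N} < 1.001 e^{201} < 2^320`. -/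
theorem p_lt_two_pow {m : ℕ} (hm : m ≤ 6112) : p m < 2 ^ 320 := by
  obtain ⟨hc, hc'⟩ := pi_sq_div_six
  set N := √(Real.pi ^ 2 / 6 * ((6112 : ℕ) - 1 / 24)) with hNdef
  have hsq : N ^ 2 = Real.pi ^ 2 / 6 * ((6112 : ℕ) - 1 / 24) :=
    Real.sq_sqrt (by norm_num; positivity)
  have hN : 100 ≤ N := Real.le_sqrt_of_sq_le (by norm_num at hc ⊢; linarith)
  have hN' : N ≤ 100.5 := Real.sqrt_le_iff.2 ⟨by norm_num, by norm_num at hc' ⊢; linarith⟩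
  have hN0 : 0 < N := by linarith
  obtain ⟨τ, hτ⟩ : ∃ τ, τ = Real.pi ^ 2 / (6 * N) := ⟨_, rfl⟩
  have hτ0 : 0 < τ := by rw [hτ]; positivity
  have hτ' : τ ≤ 1 / 50 := by
    rw [hτ, ← div_div, div_le_iff₀ hN0]; linarith
  have h1 := norm_P_le hN0 hsq hτ hτ' (s := 0) (by norm_num)
  simp only [mul_zero, Complex.ofReal_zero, zero_mul, add_zero, Complex.exp_zero, mul_one,
    norm_one, Real.sqrt_one, ne_eq, OfNat.ofNat_ne_zero, not_false_eq_true, zero_pow, zero_div,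
    neg_zero, Real.exp_zero] at h1
  have h2 := hasSum_P (z := τ) (by simpa using hτ0)
  have h3 : HasSum (fun i : ℕ ↦ (p i : ℝ) * Real.exp (-(i * τ))) (P τ).re := by
    refine hasSum_of_eq (fun i ↦ ?_) (Complex.hasSum_re h2)
    rw [← Complex.ofReal_natCast, ← Complex.ofReal_natCast, ← Complex.ofReal_mul,
      ← Complex.ofReal_neg, ← Complex.ofReal_exp, ← Complex.ofReal_mul, Complex.ofReal_re]
  have h4 : (p m : ℝ) * Real.exp (-(m * τ)) ≤ (P τ).re :=
    le_hasSum h3 m fun i _ ↦ by positivity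
  have h5 := Complex.re_le_norm (P τ)
  have h6 : scale 6112 N ≤ 1 * Real.exp (2 * N - m * τ) := by
    rw [scale, ← hτ]
    gcongr
    exact Real.sqrt_le_one.2 ((div_le_one (by positivity)).2 (by linarith [Real.pi_gt_three]))
  have h7 : (p m : ℝ) ≤ Real.exp (2 * N) * 1.001 := by
    have : (p m : ℝ) * Real.exp (-(m * τ)) ≤ Real.exp (2 * N) * 1.001 * Real.exp (-(m * τ)) := by
      rw [sub_eq_add_neg, Real.exp_add] at h6
      linarith
    exact le_of_mul_le_mul_right this (Real.exp_pos _)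
  have h8 : Real.exp (2 * N) ≤ 2.7183 ^ 201 := by
    calc Real.exp (2 * N) ≤ Real.exp ((201 : ℕ) * 1) :=
        Real.exp_le_exp.2 (by push_cast; linarith)
      _ = Real.exp 1 ^ 201 := Real.exp_nat_mul _ _
      _ ≤ _ := by gcongr; linarith [Real.exp_one_lt_d9]
  have h9 : (p m : ℝ) < 2 ^ 320 := by
    calc (p m : ℝ) ≤ 2.7183 ^ 201 * 1.001 := by linarith
      _ < 2 ^ 320 := by norm_num
  exact_mod_cast h9

/-- The truncated pentagonal sum up to sign: `(-1)^j ∑_{|k| ≤ j} (-1)^k x^{k(3k-1)/2}`. With this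
sign the newest two terms enter positively and the remaining sum is subtracted; the subtraction does
not truncate, by `negEuler_le`. -/
def negEuler (x : ℕ) : ℕ → ℕ
  | 0 => 1
  | j + 1 => (x ^ ((j + 1) * (3 * j + 2) / 2) + x ^ ((j + 1) * (3 * j + 4) / 2)) - negEuler x j

/-- Application of `f`, defined by matching on the argument: the kernel must reduce the argument to a
numeral before unfolding `f`, so a big number is computed once even when `f` uses it repeatedly. -/
def force {α : Type} (f : ℕ → α) : ℕ → α
  | 0 => f 0
  | m + 1 => f (m + 1)

/-- Newton iteration for the inverse of `-F` modulo `2^{w·2^i}`: if `F v = -1 + e` then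
`F · v(2 + F v) = -1 + e²`. The start `1` is right when `F ≡ -1` modulo `2^w`. No property of this
function is proved, since `certificate` multiplies its value back. -/
def newton (F w : ℕ) : ℕ → ℕ
  | 0 => 1
  | i + 1 => force (fun v ↦ v * (2 + F * v) % 2 ^ (w * 2 ^ (i + 1))) (newton F w i)

/-- Check that `h i * h (i + 2) ≤ h (i + 1)²` for a sequence starting with `a, b` and continuing with
the `2^d` base-`2^w` digits of `V`, least significant first. The digits are reached by halving `V`;
the continuation `k` receives the last two terms of the sequence. -/
def chk (w : ℕ) : ℕ → ℕ → (ℕ → ℕ → Bool) → ℕ → ℕ → Bool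
  | 0, V, k, a, b => Nat.ble (a * V) (b * b) && k b V
  | d + 1, V, k, a, b =>
    force (fun lo ↦ force (fun hi ↦ chk w d lo (chk w d hi k) a b) (V / 2 ^ (w * 2 ^ d)))
      (V % 2 ^ (w * 2 ^ d))

/-- The whole computation for `x = 2^320`. The numeral `V` is the inverse of `-negEuler x 63` modulo
`x^6112`, where `6112 = 64(3·64 - 1)/2` is the first pentagonal exponent that is left out. Its digits
from position `25` on are tested for log-concavity, behind two zeros. -/
def certificate : Bool :=
  force (fun F ↦ force (fun V ↦ Nat.beq ((V * F + 1) % 2 ^ (320 * 6112)) 0 &&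
    (Nat.blt V (2 ^ (320 * 6112)) && chk 320 13 (V / 2 ^ (320 * 25)) (fun _ _ ↦ true) 0 0))
    (newton F 320 13 % 2 ^ (320 * 6112))) (negEuler (2 ^ 320) 63)

theorem certificate_true : certificate = true := by decide +kernel

theorem force_eq {α : Type} (f : ℕ → α) (n : ℕ) : force f n = f n := by
  cases n <;> rfl

theorem sum_mul_pow_lt {x : ℕ} {a : ℕ → ℕ} (ha : ∀ i, a i < x) (L : ℕ) :
    ∑ i ∈ range L, a i * x ^ i < x ^ L := by
  induction L with
  | zero => simp
  | succ L ih =>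
    rw [sum_range_succ, pow_succ]
    nlinarith [mul_le_mul_left (Nat.succ_le_of_lt (ha L)) (x ^ L)]

theorem sum_mul_pow_add (x : ℕ) (a : ℕ → ℕ) (K L : ℕ) :
    ∑ i ∈ range (K + L), a i * x ^ i =
      ∑ i ∈ range K, a i * x ^ i + x ^ K * ∑ i ∈ range L, a (K + i) * x ^ i := by
  rw [sum_range_add, mul_sum]
  congr 1
  exact sum_congr rfl fun i _ ↦ by ring

/-- Reducing modulo `x^K` keeps the lowest `K` base-`x` digits. -/
theorem digits_mod {x : ℕ} {a : ℕ → ℕ} (ha : ∀ i, a i < x) (K L : ℕ) :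
    (∑ i ∈ range (K + L), a i * x ^ i) % x ^ K = ∑ i ∈ range K, a i * x ^ i := by
  rw [sum_mul_pow_add, Nat.add_mul_mod_self_left, Nat.mod_eq_of_lt (sum_mul_pow_lt ha K)]

/-- Dividing by `x^K` drops the lowest `K` base-`x` digits. -/
theorem digits_div {x : ℕ} {a : ℕ → ℕ} (ha : ∀ i, a i < x) (K L : ℕ) :
    (∑ i ∈ range (K + L), a i * x ^ i) / x ^ K = ∑ i ∈ range L, a (K + i) * x ^ i := by
  have := (Nat.zero_le _).trans_lt (ha 0)
  rw [sum_mul_pow_add, Nat.add_mul_div_left _ _ (by positivity),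
    Nat.div_eq_of_lt (sum_mul_pow_lt ha K), zero_add]

theorem chk_spec {w : ℕ} (d : ℕ) (k : ℕ → ℕ → Bool) (h : ℕ → ℕ) (hh : ∀ i, h i < 2 ^ w)
    (hc : chk w d (∑ i ∈ range (2 ^ d), h (i + 2) * (2 ^ w) ^ i) k (h 0) (h 1) = true) :
    (∀ i < 2 ^ d, h i * h (i + 2) ≤ h (i + 1) ^ 2) ∧ k (h (2 ^ d)) (h (2 ^ d + 1)) = true := by
  induction d generalizing k h with
  | zero =>
    simp only [chk, pow_zero, range_one, sum_singleton, mul_one, Bool.and_eq_true,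
      Nat.ble_eq] at hc
    refine ⟨fun i hi ↦ ?_, hc.2⟩
    obtain rfl : i = 0 := by simpa using hi
    rw [sq]; exact hc.1
  | succ d ih =>
    have ha : ∀ i, h (i + 2) < 2 ^ w := fun i ↦ hh _
    rw [chk, force_eq, force_eq, pow_mul, pow_succ, mul_two,
      digits_mod (a := fun i ↦ h (i + 2)) ha, digits_div (a := fun i ↦ h (i + 2)) ha] at hc
    obtain ⟨h1, h2⟩ := ih _ h hh hc
    have e : ∑ i ∈ range (2 ^ d), h (2 ^ d + i + 2) * (2 ^ w) ^ i =
      ∑ i ∈ range (2 ^ d), (fun j ↦ h (2 ^ d + j)) (i + 2) * (2 ^ w) ^ i := rfl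
    rw [e] at h2
    obtain ⟨h3, h4⟩ := ih k (fun j ↦ h (2 ^ d + j)) (fun j ↦ hh _) h2
    rw [pow_succ, mul_two]
    refine ⟨fun i hi ↦ ?_, by simpa only [add_assoc] using h4⟩
    rcases lt_or_ge i (2 ^ d) with hlt | hge
    · exact h1 i hlt
    · obtain ⟨j, rfl⟩ := Nat.exists_eq_add_of_le hge
      exact h3 j (by omega)

theorem negEuler_le {x : ℕ} (hx : 0 < x) (j : ℕ) :
    negEuler x j ≤ x ^ ((j + 1) * (3 * j + 2) / 2) + x ^ ((j + 1) * (3 * j + 4) / 2) := by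
  cases j with
  | zero =>
    have := pow_pos hx ((0 + 1) * (3 * 0 + 2) / 2)
    rw [negEuler]; omega
  | succ j =>
    rw [negEuler]
    refine (Nat.sub_le _ _).trans ?_
    gcongr 1 <;> refine Nat.pow_le_pow_right hx (Nat.div_le_div_right ?_) <;> gcongr <;> omega

theorem negEuler_eq {x : ℕ} (hx : 0 < x) (j : ℕ) :
    (negEuler x j : ℤ) = (-1) ^ j *
      ∑ k ∈ Icc (-j : ℤ) j, (k.negOnePow : ℤ) * (x : ℤ) ^ pentagonal k := by
  induction j with
  | zero => simp [negEuler, pentagonal_def]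
  | succ j ih =>
    have e : Icc (-(j + 1 : ℕ) : ℤ) (j + 1 : ℕ) =
        insert ((j : ℤ) + 1) (insert (-((j : ℤ) + 1)) (Icc (-j : ℤ) j)) := by
      ext k
      simp only [mem_Icc, mem_insert]
      omega
    have p1 : pentagonal ((j : ℤ) + 1) = (j + 1) * (3 * j + 2) / 2 := by
      zify; rw [natCast_pentagonal]; ring_nf
    have p2 : pentagonal (-((j : ℤ) + 1)) = (j + 1) * (3 * j + 4) / 2 := by
      zify; rw [natCast_pentagonal]; ring_nf
    have s1 : ((((j : ℤ) + 1).negOnePow : ℤˣ) : ℤ) = (-1) ^ (j + 1) := by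
      exact_mod_cast Int.coe_negOnePow_natCast (j + 1)
    rw [e, sum_insert (by simp only [mem_insert, mem_Icc]; omega),
      sum_insert (by simp only [mem_Icc]; omega), Int.negOnePow_neg, s1, p1, p2,
      negEuler, Nat.cast_sub (negEuler_le hx j), ih, pow_succ]
    push_cast
    have h1 : ((-1 : ℤ) ^ j) * (-1) ^ j = 1 := by rw [← mul_pow]; simp
    linear_combination (-1 : ℤ) *
      ((x : ℤ) ^ ((j + 1) * (3 * j + 2) / 2) + (x : ℤ) ^ ((j + 1) * (3 * j + 4) / 2)) * h1

/-- Truncating the pentagonal series below degree `pentagonal (j + 1)` keeps the terms with `|k| ≤ j`,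
since `pentagonal k` is increasing along `0, 1, -1, 2, -2, …`. -/
theorem sum_coeff_pentagonalSeries (x : ℤ) (j : ℕ) :
    ∑ n ∈ range (pentagonal (j + 1)), coeff n (pentagonalSeries ℤ) * x ^ n =
      ∑ k ∈ Icc (-j : ℤ) j, (k.negOnePow : ℤ) * x ^ pentagonal k := by
  have hlt (k : ℤ) : pentagonal k < pentagonal (j + 1) ↔ k ∈ Icc (-j : ℤ) j := by
    rw [mem_Icc]
    zify
    have h1 := two_mul_natCast_pentagonal k
    have h2 := two_mul_natCast_pentagonal (j + 1)
    constructor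
    · intro h
      constructor <;> by_contra! hk <;> nlinarith
    · rintro ⟨ha, hb⟩
      rcases le_total 0 k <;> nlinarith
  symm
  rw [← sum_image (s := Icc (-j : ℤ) j) (g := pentagonal)
    (f := fun n ↦ coeff n (pentagonalSeries ℤ) * x ^ n) pentagonal_injective.injOn |>.trans
    (sum_congr rfl fun k _ ↦ by
      rw [coeff_pentagonalSeries_pentagonal, Int.cast_id])]
  refine sum_subset (fun n hn ↦ ?_) fun n hn hn' ↦ ?_
  · obtain ⟨k, hk, rfl⟩ := mem_image.1 hn
    exact mem_range.2 ((hlt k).2 hk)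
  · rw [coeff_pentagonalSeries_eq_zero, zero_mul]
    rintro ⟨k, rfl⟩
    exact hn' (mem_image_of_mem _ ((hlt k).1 (mem_range.1 hn)))

/-- Truncations of mutually inverse power series, evaluated at an integer `x`, are inverse modulo
`x^L`. -/
theorem dvd_sum_mul_sum {f g : ℤ⟦X⟧} (hfg : f * g = 1) (L : ℕ) (x : ℤ) :
    x ^ L ∣ (∑ n ∈ range L, coeff n f * x ^ n) * (∑ n ∈ range L, coeff n g * x ^ n) - 1 := by
  have h : (Polynomial.X : Polynomial ℤ) ^ L ∣ trunc L f * trunc L g - 1 := by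
    rw [Polynomial.X_pow_dvd_iff]
    intro d hd
    have h1 := coeff_mul_eq_coeff_trunc_mul_trunc f g hd
    rw [hfg] at h1
    rw [Polynomial.coeff_sub, ← Polynomial.coeff_coe, Polynomial.coe_mul, ← h1,
      ← Polynomial.coeff_coe, Polynomial.coe_one, sub_self]
  have h2 := (Polynomial.evalRingHom x).map_dvd h
  have h3 (φ : ℤ⟦X⟧) : (trunc L φ).eval x = ∑ n ∈ range L, coeff n φ * x ^ n :=
    eval₂_trunc_eq_sum_range x (RingHom.id ℤ) L φ
  simpa [h3] using h2

/-! ### Log-concavity for small arguments -/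

/-- Both `V` and `∑_{i<L} p(i) x^i` lie below `x^L` and invert `-negEuler x j` modulo `x^L`, so they
agree. The parity of `j` fixes the sign of `negEuler`. The redundant `if` makes the digit sequence
bounded by `x` at every index, as the digit lemmas require. -/
theorem eq_sum_p_of_dvd {x j L V : ℕ} (hj : Odd j) (hL : pentagonal (j + 1) = L)
    (hp : ∀ i < L, p i < x) (hV : x ^ L ∣ V * negEuler x j + 1) (hlt : V < x ^ L) :
    V = ∑ i ∈ range L, (if i < L then p i else 0) * x ^ i := by
  have hL0 : 0 < L := by
    rw [← hL]
    have := two_mul_natCast_pentagonal (j + 1)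
    zify
    nlinarith
  have hx : 0 < x := (Nat.zero_le _).trans_lt (hp 0 hL0)
  have hF := negEuler_eq hx j
  have h1 := dvd_sum_mul_sum mk_p_mul_pentagonal L (x : ℤ)
  have h2 := sum_coeff_pentagonalSeries (x : ℤ) j
  rw [hL] at h2
  rw [h2] at h1
  have hlt' := sum_mul_pow_lt (a := fun i ↦ if i < L then p i else 0) (x := x) (fun i ↦ by
    split_ifs with hi
    · exact hp i hi
    · exact hx) L
  have hQ : ∑ i ∈ range L, coeff i (PowerSeries.mk fun n ↦ (p n : ℤ)) * (x : ℤ) ^ i =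
      ((∑ i ∈ range L, (if i < L then p i else 0) * x ^ i : ℕ) : ℤ) := by
    rw [Nat.cast_sum]
    refine sum_congr rfl fun i hi ↦ ?_
    rw [if_pos (mem_range.1 hi), coeff_mk, Nat.cast_mul, Nat.cast_pow]
  rw [hQ] at h1
  have h3 : (x : ℤ) ^ L ∣ V * negEuler x j + 1 := by exact_mod_cast hV
  rw [hF, hj.neg_one_pow] at h3
  generalize ∑ i ∈ range L, (if i < L then p i else 0) * x ^ i = Q at *
  generalize ∑ k ∈ Icc (-j : ℤ) j, (k.negOnePow : ℤ) * (x : ℤ) ^ pentagonal k = E at *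
  have h5 : Q ≡ V [MOD x ^ L] := by
    rw [Nat.modEq_iff_dvd, Nat.cast_pow]
    have h4 := dvd_sub (h1.mul_left (-(V : ℤ))) (h3.mul_left (Q : ℤ))
    have e : -(V : ℤ) * (Q * E - 1) - Q * (V * (-1 * E) + 1) = V - Q := by ring
    rwa [e] at h4
  exact (Nat.ModEq.eq_of_lt_of_lt h5 hlt' hlt).symm

/-- The sequence seen by `chk` is `0, 0, p(25), p(26), …, p(L + 24), 0, 0, …`; padding with zeros on
either side preserves the inequalities. -/
theorem log_concave_of_chk {w d L V n : ℕ} (hp : ∀ i < L + 25, p i < 2 ^ w)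
    (hV : V = ∑ i ∈ range (L + 25), (if i < L + 25 then p i else 0) * (2 ^ w) ^ i)
    (hchk : chk w d (V / (2 ^ w) ^ 25) (fun _ _ ↦ true) 0 0 = true)
    (hd : L ≤ 2 ^ d) (hn : 25 < n) (hn' : n + 1 < L + 25) :
    p (n - 1) * p (n + 1) ≤ p n ^ 2 := by
  have hx : 0 < 2 ^ w := by positivity
  have hdig : ∀ i, (if i < 25 + L then p i else 0) < 2 ^ w := fun i ↦ by
    split_ifs with hi
    · exact hp i (by omega)
    · exact hx
  set h : ℕ → ℕ := fun i ↦ if i < 2 then 0 else if i < L + 2 then p (23 + i) else 0 with hh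
  have hVd : V / (2 ^ w) ^ 25 = ∑ i ∈ range (2 ^ d), h (i + 2) * (2 ^ w) ^ i := by
    rw [hV, add_comm L, digits_div (a := fun i ↦ if i < 25 + L then p i else 0) hdig]
    refine (sum_congr rfl fun i hi ↦ ?_).trans
      (sum_subset (range_subset_range.2 hd) fun i _ hi ↦ ?_)
    · rw [mem_range] at hi
      simp only [hh]
      rw [if_pos (by omega), if_neg (by omega), if_pos (by omega),
        show 23 + (i + 2) = 25 + i by ring]
    · rw [mem_range] at hi
      simp only [hh]
      rw [if_neg (by omega), if_neg (by omega), zero_mul]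
  rw [hVd] at hchk
  have hspec := (chk_spec d _ h (fun i ↦ by
    simp only [hh]
    split_ifs with h1 h2
    · exact hx
    · exact hp _ (by omega)
    · exact hx) hchk).1 (n - 24) (by omega)
  simp only [hh] at hspec
  rwa [if_neg (by omega), if_pos (by omega), if_neg (by omega), if_pos (by omega),
    if_neg (by omega), if_pos (by omega), show 23 + (n - 24) = n - 1 by omega,
    show 23 + (n - 24 + 2) = n + 1 by omega, show 23 + (n - 24 + 1) = n by omega] at hspec

theorem log_concave_of_small {n : ℕ} (hn : 25 < n) (hn' : n ≤ 6110) :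
    p (n - 1) * p (n + 1) ≤ p n ^ 2 := by
  have hcert := certificate_true
  rw [certificate, force_eq, force_eq] at hcert
  generalize newton (negEuler (2 ^ 320) 63) 320 13 % 2 ^ (320 * 6112) = V at hcert
  simp only [Bool.and_eq_true, Nat.beq_eq, Nat.blt_eq] at hcert
  obtain ⟨hV, hlt, hchk⟩ := hcert
  rw [pow_mul] at hV hlt hchk
  have hp : ∀ i < 6087 + 25, p i < 2 ^ 320 := fun i hi ↦ p_lt_two_pow hi.le
  exact log_concave_of_chk hp (eq_sum_p_of_dvd (j := 63) (by decide) (by decide) hp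
    (Nat.dvd_of_mod_eq_zero hV) hlt) hchk (by norm_num) hn (by omega)

end PLC

/-- Log-concavity of the partition function: for all `n > 25`,
`p(n)² ≥ p(n-1) ⋅ p(n+1)`. -/
theorem partition_log_concave (n : ℕ) (hn : 25 < n) :
    Fintype.card (Nat.Partition (n - 1)) * Fintype.card (Nat.Partition (n + 1)) ≤
      Fintype.card (Nat.Partition n) ^ 2 := by
  change PLC.p (n - 1) * PLC.p (n + 1) ≤ PLC.p n ^ 2
  rcases le_or_gt n 6110 with h | h
  · exact PLC.log_concave_of_small hn h
  · obtain ⟨m, rfl⟩ : ∃ m, n = m + 1 := ⟨n - 1, by omega⟩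
    exact PLC.log_concave_of_large (by omega)
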